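/- arXiv:math/0304213 — 3 statements merged into one kernel-verified Lean document; each statement's English description precedes it below -/
import Mathlib

section
/- There exist a constant K > 0 and an integer N such that for all n ≥ N, |s_n − (n!/e²)·(1 − 4/n + 2/(n(n−1)))| ≤ K·n!/n³; that is, s_n = (n!/e²)·(1 − 4/n + 2/(n(n−1)) + O(n^{−3})). -/
def IsPermBlock {n : ℕ} (π : Equiv.Perm (Fin n)) (B : Finset (Fin n)) : Prop :=
  B.Nonempty ∧ (∃ i j : Fin n, B = Finset.Icc i j) ∧
    ∃ a b : Fin n, B.image π = Finset.Icc a b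

def IsSimplePerm {n : ℕ} (π : Equiv.Perm (Fin n)) : Prop :=
  ∀ B : Finset (Fin n), IsPermBlock π B → B.card = 1 ∨ B = Finset.univ

noncomputable def simpleCount (n : ℕ) : ℕ :=
  Nat.card {π : Equiv.Perm (Fin n) // IsSimplePerm π}

section
open Finset Polynomial

namespace SC

def NoAdj {n : ℕ} (π : Equiv.Perm (Fin n)) : Prop :=
  ∀ x y : Fin n, y.val = x.val + 1 →
    ¬ ((π x).val = (π y).val + 1 ∨ (π y).val = (π x).val + 1)

noncomputable def cA (n : ℕ) : ℕ := Nat.card {π : Equiv.Perm (Fin n) // NoAdj π}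

/-- positions of adjacencies -/
def adjS {m : ℕ} (π : Equiv.Perm (Fin (m+1))) : Finset (Fin m) :=
  univ.filter (fun i => (π i.castSucc).val = (π i.succ).val + 1 ∨
    (π i.succ).val = (π i.castSucc).val + 1)

def adj {m : ℕ} (π : Equiv.Perm (Fin (m+1))) : ℕ := (adjS π).card

def adj0 {m : ℕ} (π : Equiv.Perm (Fin (m+1))) : Prop := ∃ i ∈ adjS π, i.val = 0

instance {m : ℕ} (π : Equiv.Perm (Fin (m+1))) : Decidable (adj0 π) := by
  unfold adj0; infer_instance

def insP {m : ℕ} (v : Fin (m+2)) (τ : Equiv.Perm (Fin (m+1))) : Equiv.Perm (Fin (m+2)) :=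
  (finSuccEquiv' 0).trans ((Equiv.optionCongr τ).trans (finSuccEquiv' v).symm)

lemma insP_zero {m : ℕ} (v : Fin (m+2)) (τ : Equiv.Perm (Fin (m+1))) : insP v τ 0 = v := by
  simp [insP]

lemma insP_succ {m : ℕ} (v : Fin (m+2)) (τ : Equiv.Perm (Fin (m+1))) (i : Fin (m+1)) :
    insP v τ i.succ = v.succAbove (τ i) := by
  have : finSuccEquiv' (0 : Fin (m+2)) i.succ = some i := by
    rw [← Fin.succAbove_zero]; exact finSuccEquiv'_succAbove _ _
  simp [insP, this]

lemma insP_bij (m : ℕ) : Function.Bijective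
    (fun q : Fin (m+2) × Equiv.Perm (Fin (m+1)) => insP q.1 q.2) := by
  rw [Fintype.bijective_iff_injective_and_card]
  constructor
  · rintro ⟨v, τ⟩ ⟨v', τ'⟩ h
    simp only at h
    have h0 : v = v' := by rw [← insP_zero v τ, h, insP_zero]
    subst h0
    congr 1
    ext i
    have := congrArg (fun e => e i.succ) h
    simp only [insP_succ] at this
    rw [Fin.succAbove_right_injective this]
  · simp [Fintype.card_perm, Nat.factorial_succ (m+1)]

lemma sum_insP {M : Type*} [AddCommMonoid M] (m : ℕ) (f : Equiv.Perm (Fin (m+2)) → M) :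
    ∑ π, f π = ∑ τ : Equiv.Perm (Fin (m+1)), ∑ v : Fin (m+2), f (insP v τ) := by
  rw [← Equiv.sum_comp (Equiv.ofBijective _ (insP_bij m)) f, Fintype.sum_prod_type_right]
  rfl

/-- values whose insertion creates an adjacency -/
def crS {m : ℕ} (τ : Equiv.Perm (Fin (m+1))) : Finset (Fin (m+2)) := {(τ 0).castSucc, (τ 0).succ}

/-- values whose insertion destroys an adjacency -/
def brS {m : ℕ} (τ : Equiv.Perm (Fin (m+1))) : Finset (Fin (m+2)) :=
  (adjS τ).image (fun i => (max (τ i.castSucc) (τ i.succ)).castSucc)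

lemma mem_adjS {m : ℕ} (π : Equiv.Perm (Fin (m+1))) (i : Fin m) : i ∈ adjS π ↔
   ((π i.castSucc).val = (π i.succ).val + 1 ∨
    (π i.succ).val = (π i.castSucc).val + 1) := by simp [adjS]

lemma max_val {m : ℕ} (a b : Fin m) : (max a b).val = max a.val b.val := by
  rcases le_total a b with h | h
  · rw [max_eq_right h, max_eq_right (by exact_mod_cast h)]
  · rw [max_eq_left h, max_eq_left (by exact_mod_cast h)]

lemma succAbove_val {m : ℕ} (v : Fin (m+1)) (x : Fin m) :
    (v.succAbove x).val = if x.val < v.val then x.val else x.val + 1 := by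
  simp only [Fin.succAbove, Fin.lt_def]
  split_ifs <;> simp_all

lemma br_inj {m : ℕ} (τ : Equiv.Perm (Fin (m+1))) (i j : Fin m) (hi : i ∈ adjS τ)
    (hj : j ∈ adjS τ)
    (h : max (τ i.castSucc).val (τ i.succ).val = max (τ j.castSucc).val (τ j.succ).val) :
    i = j := by
  rw [mem_adjS] at hi hj
  have e1 : ∀ x y : Fin (m+1), (τ x).val = (τ y).val → x.val = y.val := by
    intro x y h; rw [τ.injective (Fin.ext h)]
  have a1 := e1 i.castSucc j.castSucc
  have a2 := e1 i.castSucc j.succ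
  have a3 := e1 i.succ j.castSucc
  have a4 := e1 i.succ j.succ
  simp only [Fin.val_castSucc, Fin.val_succ] at a1 a2 a3 a4
  apply Fin.ext
  omega

lemma card_brS {m : ℕ} (τ : Equiv.Perm (Fin (m+1))) : (brS τ).card = adj τ := by
  unfold brS adj
  apply Finset.card_image_of_injOn
  intro i hi j hj h
  apply br_inj τ i j hi hj
  simp only at h
  have := congrArg Fin.val h
  simpa [max_val] using this

lemma card_crS {m : ℕ} (τ : Equiv.Perm (Fin (m+1))) : (crS τ).card = 2 := by
  unfold crS
  apply Finset.card_pair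
  intro h
  have := congrArg Fin.val h
  simp at this

lemma cr_br {m : ℕ} (τ : Equiv.Perm (Fin (m+1))) :
    (crS τ ∩ brS τ).card = if adj0 τ then 1 else 0 := by
  split_ifs with h
  · obtain ⟨i, hi, hi0⟩ := h
    rw [Finset.card_eq_one]
    refine ⟨(max (τ i.castSucc) (τ i.succ)).castSucc, ?_⟩
    have h0 : i.castSucc = 0 := Fin.ext hi0
    ext v
    simp only [crS, brS, mem_inter, mem_insert, mem_singleton, mem_image]
    constructor
    · rintro ⟨h1, j, hj, rfl⟩
      have : i = j := by
        have hi' := hi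
        have hj' := hj
        rw [mem_adjS] at hi' hj'
        have e1 : ∀ x y : Fin (m+1), (τ x).val = (τ y).val → x.val = y.val := by
          intro x y h; rw [τ.injective (Fin.ext h)]
        simp only [Fin.ext_iff, Fin.val_castSucc, Fin.val_succ, max_val] at h1
        have a1 := e1 0 j.castSucc
        have a2 := e1 0 j.succ
        simp only [Fin.val_castSucc, Fin.val_succ, Fin.val_zero] at a1 a2
        apply Fin.ext
        omega
      subst this; rfl
    · rintro rfl
      refine ⟨?_, i, hi, rfl⟩
      rw [mem_adjS] at hi
      simp only [Fin.ext_iff, Fin.val_castSucc, Fin.val_succ, max_val]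
      rw [← h0]
      omega
  · rw [Finset.card_eq_zero, Finset.eq_empty_iff_forall_notMem]
    intro v hv
    simp only [crS, brS, mem_inter, mem_insert, mem_singleton, mem_image] at hv
    obtain ⟨h1, j, hj, rfl⟩ := hv
    apply h
    refine ⟨j, hj, ?_⟩
    rw [mem_adjS] at hj
    have e1 : ∀ x y : Fin (m+1), (τ x).val = (τ y).val → x.val = y.val := by
      intro x y h; rw [τ.injective (Fin.ext h)]
    simp only [Fin.ext_iff, Fin.val_castSucc, Fin.val_succ, max_val] at h1
    have a1 := e1 0 j.castSucc
    have a2 := e1 0 j.succ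
    simp only [Fin.val_castSucc, Fin.val_succ, Fin.val_zero] at a1 a2
    omega

lemma zero_mem_adjS_insP {m : ℕ} (v : Fin (m+2)) (τ : Equiv.Perm (Fin (m+1))) :
    (0 : Fin (m+1)) ∈ adjS (insP v τ) ↔ v ∈ crS τ := by
  rw [mem_adjS, Fin.castSucc_zero, insP_zero, insP_succ, succAbove_val]
  simp only [crS, mem_insert, mem_singleton, Fin.ext_iff, Fin.val_castSucc, Fin.val_succ]
  split_ifs <;> omega

lemma adj0_insP {m : ℕ} (v : Fin (m+2)) (τ : Equiv.Perm (Fin (m+1))) :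
    adj0 (insP v τ) ↔ v ∈ crS τ := by
  rw [← zero_mem_adjS_insP]
  constructor
  · rintro ⟨i, hi, h0⟩
    have : i = 0 := Fin.ext h0
    rwa [← this]
  · intro h; exact ⟨0, h, rfl⟩

lemma succ_mem_adjS_insP {m : ℕ} (v : Fin (m+2)) (τ : Equiv.Perm (Fin (m+1))) (i : Fin m) :
    i.succ ∈ adjS (insP v τ) ↔
      i ∈ adjS τ ∧ v ≠ (max (τ i.castSucc) (τ i.succ)).castSucc := by
  rw [mem_adjS, mem_adjS, ← Fin.succ_castSucc, insP_succ, insP_succ, succAbove_val, succAbove_val]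
  simp only [ne_eq, Fin.ext_iff, Fin.val_castSucc, max_val]
  split_ifs <;> omega

lemma adj_insP {m : ℕ} (v : Fin (m+2)) (τ : Equiv.Perm (Fin (m+1))) :
    adj (insP v τ) + (if v ∈ brS τ then 1 else 0) = adj τ + (if v ∈ crS τ then 1 else 0) := by
  classical
  have h1 : adjS (insP v τ) = (if v ∈ crS τ then {0} else ∅) ∪
      (((adjS τ).filter (fun i => v ≠ (max (τ i.castSucc) (τ i.succ)).castSucc)).image Fin.succ) := by
    ext i
    refine Fin.cases ?_ (fun i => ?_) i
    · rw [zero_mem_adjS_insP]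
      split_ifs with h <;> simp [h, Fin.succ_ne_zero]
    · rw [succ_mem_adjS_insP]
      split_ifs with h <;> simp [Fin.succ_ne_zero]
  have h2 : (adjS (insP v τ)).card = (if v ∈ crS τ then 1 else 0) +
     ((adjS τ).filter (fun i => v ≠ (max (τ i.castSucc) (τ i.succ)).castSucc)).card := by
    rw [h1, Finset.card_union_of_disjoint, Finset.card_image_of_injective _ (Fin.succ_injective _)]
    · split_ifs <;> simp
    · split_ifs <;> simp [Fin.succ_ne_zero]
  have h3 : ((adjS τ).filter (fun i => ¬ v ≠ (max (τ i.castSucc) (τ i.succ)).castSucc)).card =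
      if v ∈ brS τ then 1 else 0 := by
    split_ifs with h
    · simp only [brS, mem_image] at h
      obtain ⟨j, hj, rfl⟩ := h
      rw [Finset.card_eq_one]
      refine ⟨j, ?_⟩
      ext i
      simp only [mem_filter, mem_singleton, not_not]
      constructor
      · rintro ⟨hi, h⟩
        apply br_inj τ i j hi hj
        have := congrArg Fin.val h
        simpa [max_val] using this.symm
      · rintro rfl; exact ⟨hj, rfl⟩
    · rw [Finset.card_eq_zero, Finset.eq_empty_iff_forall_notMem]
      intro i hi
      simp only [mem_filter, not_not] at hi
      apply h
      simp only [brS, mem_image]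
      exact ⟨i, hi.1, hi.2.symm⟩
  have h4 := Finset.card_filter_add_card_filter_not (s := adjS τ)
    (fun i => v ≠ (max (τ i.castSucc) (τ i.succ)).castSucc)
  unfold adj
  omega

noncomputable def PP (m : ℕ) : ℝ[X] := ∑ π : Equiv.Perm (Fin (m+1)), (X + 1) ^ adj π

noncomputable def UU (m : ℕ) : ℝ[X] := ∑ π : Equiv.Perm (Fin (m+1)),
  if adj0 π then (X + 1) ^ (adj π - 1) else 0

lemma adj_pos_of_adj0 {m : ℕ} (π : Equiv.Perm (Fin (m+1))) (h : adj0 π) : 1 ≤ adj π := by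
  obtain ⟨i, hi, _⟩ := h
  exact Finset.card_pos.mpr ⟨i, hi⟩

/-- The four classes of inserted values. -/
lemma sum_classes {α M : Type*} [Fintype α] [DecidableEq α] [AddCommGroup M] (A B : Finset α)
    (f : α → M) (a b c : M)
    (hA : ∀ v, v ∈ A → v ∉ B → f v = a) (hB : ∀ v, v ∉ A → v ∈ B → f v = b)
    (hC : ∀ v, (v ∈ A ↔ v ∈ B) → f v = c) :
    ∑ v, f v = (A.card - (A ∩ B).card : ℤ) • a + (B.card - (A ∩ B).card : ℤ) • b +
      (Fintype.card α - A.card - B.card + 2 * (A ∩ B).card : ℤ) • c := by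
  have h : ∀ v, f v = c + (if v ∈ A then a - c else 0) + (if v ∈ B then b - c else 0)
      + (if v ∈ A ∩ B then c + c - a - b else 0) := by
    intro v
    by_cases h1 : v ∈ A <;> by_cases h2 : v ∈ B
    · rw [hC v (by tauto)]; simp [h1, h2]; abel
    · rw [hA v h1 h2]; simp [h1, h2]
    · rw [hB v h1 h2]; simp [h1, h2]
    · rw [hC v (by tauto)]; simp [h1, h2]
  rw [Finset.sum_congr rfl (fun v _ => h v)]
  simp only [Finset.sum_add_distrib, Finset.sum_ite_mem, Finset.univ_inter, Finset.sum_const,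
    Finset.card_univ]
  simp only [← natCast_zsmul]
  module

lemma PP_succ (m : ℕ) : PP (m+1) = ((m : ℝ[X]) + 2 + 2 * X) * PP m - X * derivative (PP m)
    - X^2 * UU m := by
  unfold PP UU
  rw [sum_insP, derivative_sum, Finset.mul_sum, Finset.mul_sum, Finset.mul_sum,
    ← Finset.sum_sub_distrib, ← Finset.sum_sub_distrib]
  refine Finset.sum_congr rfl (fun τ _ => ?_)
  have hh := sum_classes (crS τ) (brS τ) (fun v => (X + 1 : ℝ[X]) ^ adj (insP v τ))
    ((X+1)^(adj τ + 1)) ((X+1)^(adj τ - 1)) ((X+1)^(adj τ)) ?_ ?_ ?_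
  · rw [hh, card_brS, card_crS, cr_br]
    have hd : derivative ((X + 1 : ℝ[X]) ^ adj τ) = (adj τ : ℝ[X]) * (X + 1) ^ (adj τ - 1) := by
      simp [derivative_pow]
    rw [hd]
    simp only [Fintype.card_fin]
    by_cases h : adj0 τ
    · have := adj_pos_of_adj0 τ h
      obtain ⟨k, hk⟩ : ∃ k, adj τ = k + 1 := ⟨adj τ - 1, by omega⟩
      simp only [h, if_true, hk, Nat.add_sub_cancel]
      simp only [zsmul_eq_mul]
      push_cast
      ring
    · simp only [h, if_false, zsmul_eq_mul]
      rcases Nat.eq_zero_or_pos (adj τ) with h0 | h0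
      · rw [h0]; push_cast; simp; ring
      · obtain ⟨k, hk⟩ : ∃ k, adj τ = k + 1 := ⟨adj τ - 1, by omega⟩
        simp only [hk, Nat.add_sub_cancel]
        push_cast
        ring
  · intro v h1 h2
    have := adj_insP v τ
    simp only [h1, h2, if_true, if_false] at this
    simp only [← this]; simp
  · intro v h1 h2
    have := adj_insP v τ
    simp only [h1, h2, if_true, if_false] at this
    congr 1; omega
  · intro v h1
    have := adj_insP v τ
    simp only [h1] at this
    congr 1; omega

lemma UU_succ (m : ℕ) : UU (m+1) = 2 * PP m - X * UU m := by
  unfold PP UU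
  rw [sum_insP, Finset.mul_sum, Finset.mul_sum, ← Finset.sum_sub_distrib]
  refine Finset.sum_congr rfl (fun τ _ => ?_)
  have h : ∀ v : Fin (m+2), (if adj0 (insP v τ) then (X + 1 : ℝ[X]) ^ (adj (insP v τ) - 1) else 0) =
      (if v ∈ crS τ then (X + 1) ^ adj τ else 0) +
      (if v ∈ crS τ ∩ brS τ then (X + 1) ^ (adj τ - 1) - (X + 1) ^ adj τ else 0) := by
    intro v
    have h1 := adj_insP v τ
    have h2 := adj0_insP v τ
    by_cases ha : v ∈ crS τ <;> by_cases hb : v ∈ brS τ <;>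
      simp only [ha, hb, h2, if_true, if_false, Finset.mem_inter, and_true, and_false] at h1 ⊢
    · simp only [Nat.add_right_cancel h1, add_sub_cancel]
    · have : adj (insP v τ) - 1 = adj τ := by omega
      rw [this, add_zero]
    · simp
    · simp
  rw [Finset.sum_congr rfl (fun v _ => h v)]
  simp only [Finset.sum_add_distrib, Finset.sum_ite_mem, Finset.univ_inter, Finset.sum_const]
  rw [card_crS, cr_br]
  by_cases h0 : adj0 τ
  · have := adj_pos_of_adj0 τ h0
    obtain ⟨k, hk⟩ : ∃ k, adj τ = k + 1 := ⟨adj τ - 1, by omega⟩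
    simp only [h0, if_true, hk, Nat.add_sub_cancel, nsmul_eq_mul]
    push_cast
    ring
  · simp [h0]

lemma PP_zero : PP 0 = 1 := by
  unfold PP
  have : ∀ π : Equiv.Perm (Fin (0+1)), adj π = 0 := by
    intro π; simp [adj, Finset.eq_empty_of_isEmpty]
  simp [this]

lemma UU_zero : UU 0 = 0 := by
  unfold UU
  apply Finset.sum_eq_zero
  intro π _
  rw [if_neg]
  rintro ⟨i, _⟩
  exact i.elim0

/-- The partial differential relation satisfied by the adjacency polynomials. -/
lemma PU_rel (m : ℕ) :
    (derivative (PP (m+2)) + 2 * X * derivative (PP (m+1)) - X^2 * derivative (PP m)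
      = 2 * ((m : ℝ[X]) + 2) * PP (m+1)) ∧
    (derivative (UU (m+2)) + 2 * X * derivative (UU (m+1)) - X^2 * derivative (UU m)
      = (2 * ((m : ℝ[X]) + 2) - 3) * UU (m+1) + X * UU m) := by
  induction m with
  | zero =>
    rw [PP_succ 1, UU_succ 1, PP_succ 0, UU_succ 0, PP_zero, UU_zero]
    simp only [derivative_add, derivative_sub, derivative_mul, derivative_X, derivative_one,
      derivative_pow, derivative_ofNat, derivative_zero, derivative_natCast, Nat.cast_zero,
      Nat.cast_one, map_zero]
    constructor
    · norm_num [map_ofNat]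
      ring
    · norm_num
  | succ m ih =>
    obtain ⟨h1, h2⟩ := ih
    have h1' := congrArg derivative h1
    have h2' := congrArg derivative h2
    have e0 := PP_succ m
    have e1 := PP_succ (m+1)
    have e2 := PP_succ (m+2)
    have u0 := UU_succ m
    have u1 := UU_succ (m+1)
    have u2 := UU_succ (m+2)
    have d0 := congrArg derivative e0
    have d1 := congrArg derivative e1
    have d2 := congrArg derivative e2
    have f0 := congrArg derivative u0
    have f1 := congrArg derivative u1
    have f2 := congrArg derivative u2
    simp only [derivative_add, derivative_sub, derivative_mul, derivative_X, derivative_one,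
      derivative_pow, derivative_ofNat, derivative_zero, derivative_natCast] at h1' h2' d0 d1 d2 f0 f1 f2
    push_cast at *
    simp only [map_ofNat] at *
    constructor
    · linear_combination d2 + 2*X*d1 - X^2*d0 + ((m:ℝ[X])+3+2*X)*h1 - X*h1' - X^2*h2
        - (2*(m:ℝ[X])+4)*e1 - 2*X*u1 + X^2 * u0
    · linear_combination f2 + 2*X*f1 - X^2*f0 + 2*h1 - X*h2 - (2*(m:ℝ[X])+4)*u1

end SC
end

section
open Finset Filter Topology
namespace SC

def OO (k : ℕ) (f : ℕ → ℝ) : Prop := ∃ K : ℝ, ∀ m : ℕ, |f m| ≤ K / ((m : ℝ) + 1) ^ k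

lemma OO.add {k : ℕ} {f g : ℕ → ℝ} (hf : OO k f) (hg : OO k g) : OO k (fun m => f m + g m) := by
  obtain ⟨K, hK⟩ := hf
  obtain ⟨L, hL⟩ := hg
  refine ⟨K + L, fun m => ?_⟩
  rw [add_div]
  exact (abs_add_le _ _).trans (add_le_add (hK m) (hL m))

lemma OO.mul {k l : ℕ} {f g : ℕ → ℝ} (hf : OO k f) (hg : OO l g) :
    OO (k + l) (fun m => f m * g m) := by
  obtain ⟨K, hK⟩ := hf
  obtain ⟨L, hL⟩ := hg
  refine ⟨K * L, fun m => ?_⟩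
  rw [abs_mul, pow_add, mul_div_mul_comm]
  exact mul_le_mul (hK m) (hL m) (abs_nonneg _) ((abs_nonneg _).trans (hK m))

lemma OO.const (c : ℝ) : OO 0 (fun _ => c) := ⟨|c|, fun m => by simp⟩

lemma OO.cmul {k : ℕ} {f : ℕ → ℝ} (c : ℝ) (hf : OO k f) : OO k (fun m => c * f m) := by
  have := (OO.const c).mul hf
  rwa [Nat.zero_add] at this

lemma OO.neg {k : ℕ} {f : ℕ → ℝ} (hf : OO k f) : OO k (fun m => - f m) := by
  obtain ⟨K, hK⟩ := hf
  exact ⟨K, fun m => by rw [abs_neg]; exact hK m⟩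

lemma OO.sub {k : ℕ} {f g : ℕ → ℝ} (hf : OO k f) (hg : OO k g) : OO k (fun m => f m - g m) := by
  simpa [sub_eq_add_neg] using hf.add hg.neg

lemma OO.mono {k l : ℕ} {f : ℕ → ℝ} (h : l ≤ k) (hf : OO k f) : OO l f := by
  obtain ⟨K, hK⟩ := hf
  refine ⟨K, fun m => (hK m).trans ?_⟩
  have h0 : 0 ≤ K := by
    have := (abs_nonneg _).trans (hK 0)
    simpa using this
  have h1 : (1:ℝ) ≤ (m:ℝ) + 1 := by linarith [Nat.cast_nonneg (α := ℝ) m]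
  exact div_le_div_of_nonneg_left h0 (by positivity) (pow_le_pow_right₀ h1 h)

lemma OO.shift {k : ℕ} {f : ℕ → ℝ} (hf : OO k f) (i : ℕ) : OO k (fun m => f (m + i)) := by
  obtain ⟨K, hK⟩ := hf
  refine ⟨K, fun m => (hK (m + i)).trans ?_⟩
  have h0 : 0 ≤ K := by
    have := (abs_nonneg _).trans (hK 0)
    simpa using this
  apply div_le_div_of_nonneg_left h0 (by positivity)
  push_cast
  gcongr
  linarith [Nat.cast_nonneg (α := ℝ) i]

lemma OO.unshift1 {k : ℕ} {f : ℕ → ℝ} (hf : OO k (fun m => f (m + 1))) : OO k f := by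
  obtain ⟨K, hK⟩ := hf
  have h0 : 0 ≤ K := by
    have := (abs_nonneg _).trans (hK 0)
    simpa using this
  refine ⟨|f 0| + K * 2 ^ k, fun m => ?_⟩
  rcases m with _ | m
  · simp only [Nat.cast_zero, zero_add, one_pow, div_one]
    have : 0 ≤ K * 2 ^ k := by positivity
    linarith
  · refine (hK m).trans ?_
    rw [div_le_div_iff₀ (by positivity) (by positivity)]
    have h1 : (((m + 1 : ℕ) : ℝ) + 1) ^ k ≤ 2 ^ k * ((m:ℝ) + 1) ^ k := by
      rw [← mul_pow]
      apply pow_le_pow_left₀ (by positivity)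
      push_cast
      linarith [Nat.cast_nonneg (α := ℝ) m]
    calc K * (((m + 1 : ℕ) : ℝ) + 1) ^ k ≤ K * (2 ^ k * ((m:ℝ) + 1) ^ k) := by gcongr
      _ = (K * 2 ^ k) * ((m:ℝ) + 1) ^ k := by ring
      _ ≤ _ := by
        gcongr
        linarith [abs_nonneg (f 0)]

lemma OO.unshift {k : ℕ} {f : ℕ → ℝ} (i : ℕ) (hf : OO k (fun m => f (m + i))) : OO k f := by
  induction i with
  | zero => simpa using hf
  | succ i ih =>
    apply ih
    apply OO.unshift1
    simpa [add_assoc, add_comm 1 i] using hf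

lemma OO.inv (i : ℕ) : OO 1 (fun m => 1 / ((m : ℝ) + (i + 1))) := by
  refine ⟨1, fun m => ?_⟩
  rw [abs_of_nonneg (by positivity), pow_one]
  apply div_le_div_of_nonneg_left (by positivity) (by positivity)
  linarith [Nat.cast_nonneg (α := ℝ) i]

lemma OO.congr {k : ℕ} {f g : ℕ → ℝ} (hf : OO k f) (h : ∀ m, g m = f m) : OO k g := by
  obtain ⟨K, hK⟩ := hf
  exact ⟨K, fun m => by rw [h]; exact hK m⟩

lemma OO.tail {c : ℕ → ℝ} {L : ℝ} (hc : Tendsto c atTop (𝓝 L))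
    (h : OO 4 (fun m => c (m+1) - c m)) : OO 3 (fun m => c m - L) := by
  obtain ⟨K, hK⟩ := h
  have h0 : 0 ≤ K := by
    have := (abs_nonneg _).trans (hK 0)
    simpa using this
  have key : ∀ m : ℕ, 1 / ((m:ℝ)+1)^4 ≤ 8 * (1 / ((m:ℝ)+1)^3 - 1/((m:ℝ)+2)^3) := by
    intro m
    have hm := Nat.cast_nonneg (α := ℝ) m
    rw [div_sub_div _ _ (by positivity) (by positivity), ← mul_div_assoc,
      div_le_div_iff₀ (by positivity) (by positivity)]
    have e : 8 * (1 * ((m:ℝ)+2)^3 - ((m:ℝ)+1)^3 * 1) * ((m:ℝ)+1)^4 - 1 * (((m:ℝ)+1)^3 * ((m:ℝ)+2)^3)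
      = ((m:ℝ)+1)^3 * (23*(m:ℝ)^3+90*(m:ℝ)^2+116*(m:ℝ)+48) := by ring
    have : 0 ≤ ((m:ℝ)+1)^3 * (23*(m:ℝ)^3+90*(m:ℝ)^2+116*(m:ℝ)+48) := by positivity
    linarith
  have hz : Tendsto (fun m : ℕ => 8 * K * (1 / ((m:ℝ)+1)^3)) atTop (𝓝 0) := by
    have h1 : Tendsto (fun m : ℕ => (1 / ((m:ℝ)+1))) atTop (𝓝 0) :=
      tendsto_one_div_add_atTop_nhds_zero_nat
    have h2 := (h1.pow 3).const_mul (8*K)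
    simpa [one_div] using h2
  have hk : ∀ m : ℕ, |c (m+1) - c m| ≤ 8 * K * (1 / ((m:ℝ)+1)^3) - 8 * K * (1/((m:ℝ)+2)^3) := by
    intro m
    refine (hK m).trans ?_
    have := mul_le_mul_of_nonneg_left (key m) h0
    rw [mul_one_div] at this
    linarith
  refine ⟨8 * K, fun m => ?_⟩
  have m1 : Monotone (fun m : ℕ => c m - 8 * K * (1 / ((m:ℝ)+1)^3)) := by
    apply monotone_nat_of_le_succ
    intro m
    have := (abs_le.mp (hk m)).1
    push_cast
    rw [show ((m:ℝ)+1+1) = m + 2 by ring]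
    linarith
  have m2 : Antitone (fun m : ℕ => c m + 8 * K * (1 / ((m:ℝ)+1)^3)) := by
    apply antitone_nat_of_succ_le
    intro m
    have := (abs_le.mp (hk m)).2
    push_cast
    rw [show ((m:ℝ)+1+1) = m + 2 by ring]
    linarith
  have t1 := m1.ge_of_tendsto (by simpa using hc.sub hz) m
  have t2 := m2.le_of_tendsto (by simpa using hc.add hz) m
  rw [abs_le, ← mul_one_div]
  constructor <;> linarith

theorem asym (a t u : ℕ → ℝ) (ha0 : ∀ m, 0 ≤ a m) (ha1 : ∀ m, a m ≤ 1)
    (h1 : ∀ m : ℕ, ((m:ℝ)+2) * a (m+1) = m * a m + t m - u m)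
    (h2 : ∀ m : ℕ, t (m+2) * (((m:ℝ)+3)*((m:ℝ)+2)) = 2*((m:ℝ)+2) * t (m+1) + t m
        + 2*((m:ℝ)+2)^2 * a (m+1))
    (h3 : ∀ m : ℕ, u (m+1) * ((m:ℝ)+2) = 2 * a m + u m)
    (ht0 : |t 0| ≤ 10) (ht1 : |t 1| ≤ 10) (hu0 : |u 0| ≤ 2)
    (L : ℝ) (hL : Tendsto a atTop (𝓝 L)) :
    OO 3 (fun m => a m - L * (1 - 2 / ((m:ℝ)+1)^2)) := by
  have Oa : OO 0 a := ⟨1, fun m => by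
    rw [abs_of_nonneg (ha0 m)]; simpa using ha1 m⟩
  have Ou0 : OO 0 u := by
    refine ⟨2, fun m => ?_⟩
    simp only [pow_zero, div_one]
    induction m with
    | zero => exact hu0
    | succ m ih =>
      have hm := Nat.cast_nonneg (α := ℝ) m
      have e : u (m+1) = (2 * a m + u m) / ((m:ℝ)+2) := by
        rw [eq_div_iff (by positivity)]; exact h3 m
      rw [abs_le] at ih
      rw [e, abs_div, abs_of_pos (show (0:ℝ) < m + 2 by positivity), div_le_iff₀ (by positivity),
        abs_le]
      constructor <;> linarith [ha0 m, ha1 m]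
  have Ot0 : OO 0 t := by
    refine ⟨10, fun m => ?_⟩
    simp only [pow_zero, div_one]
    induction m using Nat.strong_induction_on with
    | _ m ih =>
      match m with
      | 0 => exact ht0
      | 1 => exact ht1
      | m+2 =>
        have i1 := ih m (by omega)
        have i2 := ih (m+1) (by omega)
        have hm := Nat.cast_nonneg (α := ℝ) m
        have e : t (m+2) = (2*((m:ℝ)+2) * t (m+1) + t m
          + 2*((m:ℝ)+2)^2 * a (m+1)) / (((m:ℝ)+3)*((m:ℝ)+2)) := by
          rw [eq_div_iff (by positivity)]; exact h2 m
        rw [abs_le] at i1 i2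
        rw [e, abs_div, abs_of_pos (show (0:ℝ) < (((m:ℝ)+3)*((m:ℝ)+2)) by positivity),
          div_le_iff₀ (by positivity), abs_le]
        have A0 := ha0 (m+1)
        have A1 := ha1 (m+1)
        constructor
        · nlinarith [mul_nonneg hm A0, mul_nonneg hm (sub_nonneg.2 i2.1), mul_nonneg (mul_nonneg hm hm) A0]
        · nlinarith [mul_nonneg hm A0, mul_nonneg hm (sub_nonneg.2 i2.2),
            mul_nonneg (mul_nonneg hm hm) A0, mul_nonneg hm (sub_nonneg.2 A1),
            mul_nonneg (mul_nonneg hm hm) (sub_nonneg.2 A1)]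
  have i1 := OO.inv 0
  have i2 := OO.inv 1
  have i3 := OO.inv 2
  norm_num at i1 i2 i3
  set d : ℕ → ℝ := fun m => a (m+1) - a m with hd
  have nz1 : ∀ m : ℕ, (m:ℝ) + 1 ≠ 0 := fun m => by positivity
  have nz2 : ∀ m : ℕ, (m:ℝ) + 2 ≠ 0 := fun m => by positivity
  have nz3 : ∀ m : ℕ, (m:ℝ) + 3 ≠ 0 := fun m => by positivity
  -- solved forms
  have ed : ∀ m, d m = ((m:ℝ)+2)⁻¹ * (t m - 2 * a m - u m) := by
    intro m
    rw [eq_inv_mul_iff_mul_eq₀ (nz2 m)]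
    simp only [hd]
    linear_combination h1 m
  have et : ∀ m, t (m+2) = 2 * ((m:ℝ)+2) * ((m:ℝ)+3)⁻¹ * a (m+1) + 2 * ((m:ℝ)+3)⁻¹ * t (m+1)
      + ((m:ℝ)+3)⁻¹ * ((m:ℝ)+2)⁻¹ * t m := by
    intro m
    have := nz2 m
    have := nz3 m
    field_simp
    linear_combination h2 m
  have eu : ∀ m, u (m+1) = ((m:ℝ)+2)⁻¹ * (2 * a m + u m) := by
    intro m
    rw [eq_inv_mul_iff_mul_eq₀ (nz2 m)]
    linear_combination h3 m
  have ea1 : ∀ m, a (m+1) = a m + d m := fun m => by simp [hd]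
  have ea2 : ∀ m, a (m+2) = a m + d m + d (m+1) := fun m => by simp [hd]
  -- first round
  have Od1 : OO 1 d := by
    refine (i2.mul ((Ot0.sub (Oa.cmul 2)).sub Ou0)).congr ?_
    intro m; rw [ed]
  have Ou1 : OO 1 u := by
    apply OO.unshift 1
    refine (i2.mul ((Oa.cmul 2).add Ou0)).congr ?_
    intro m; rw [eu]
  have Ot1 : OO 1 (fun m => t m - 2 * a m) := by
    apply OO.unshift 2
    refine ((((i3.mul (Oa.shift 1)).cmul (-2)).add ((i3.mul (Ot0.shift 1)).cmul 2)).add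
      (((i3.mul (i2.mul Ot0)).mono (by norm_num)).add ((Od1.shift 1).cmul (-2)))).congr ?_
    intro m
    rw [et, ea2, ea1]
    have := nz2 m
    have := nz3 m
    field_simp
    ring
  have Od2 : OO 2 d := by
    refine (i2.mul (Ot1.sub Ou1)).congr ?_
    intro m; rw [ed]
  have Ou2 : OO 2 (fun m => u m - 2 * a m * ((m:ℝ)+1)⁻¹) := by
    apply OO.unshift 1
    refine ((i2.mul Ou1).add ((i2.mul (Od2.mono (show 1 ≤ 2 by norm_num))).cmul (-2))).congr ?_
    intro m
    rw [eu, ea1]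
    push_cast
    rw [show (m:ℝ)+1+1 = m+2 by ring]
    have := nz2 m
    field_simp
    ring
  have Ot2 : OO 2 (fun m => t m - 2 * a m - 2 * a m * ((m:ℝ)+1)⁻¹) := by
    apply OO.unshift 2
    refine (((i3.mul (Ot1.shift 1)).cmul 2).add
      ((i3.mul (i2.mul Ot0)).add (((Od2.shift 1).cmul (-2)).add
        ((((i3.mono (Nat.zero_le _)).mul (Od2.shift 1))).cmul (-2))))).congr ?_
    intro m
    rw [et, ea2, ea1]
    push_cast
    rw [show (m:ℝ)+2+1 = m+3 by ring]
    have := nz2 m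
    have := nz3 m
    field_simp
    ring
  have Od3 : OO 3 d := by
    refine (i2.mul (Ot2.sub Ou2)).congr ?_
    intro m; rw [ed]; ring
  have Ou3 : OO 3 (fun m => u m - 2 * a m * (((m:ℝ)+1)⁻¹ + ((m:ℝ)+1)⁻¹^2)) := by
    apply OO.unshift 1
    refine ((i2.mul Ou2).add ((((i2.mono (Nat.zero_le _)).mul Od3).cmul (-2)).add
      (((((i2.mul i2).mono (Nat.zero_le _)).mul Od3).cmul (-2)).add
       (((i1.mul (i2.mul i2)).mul Oa).cmul 2)))).congr ?_
    intro m
    rw [eu, ea1]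
    push_cast
    rw [show (m:ℝ)+1+1 = m+2 by ring]
    have := nz1 m
    have := nz2 m
    field_simp
    ring
  have Ot3 : OO 3 (fun m => t m - 2 * a m * (1 + ((m:ℝ)+1)⁻¹ + 3 * ((m:ℝ)+1)⁻¹^2)) := by
    apply OO.unshift 2
    have O2 : OO 0 (fun m => (2:ℝ)) := OO.const 2
    refine (((i3.mul (Ot2.shift 1)).cmul 2).add
      ((i3.mul (i2.mul Ot1)).add
       ((((i3.mul (i3.mul i2)).mul (Oa)).cmul 6).add
        ((((OO.const (-2)).add (((i3.mono (Nat.zero_le _)).cmul (-2)).add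
          ((i3.mul i3).mono (Nat.zero_le _) |>.cmul (-6)))).mul (Od3.shift 1)).add
         (((((i3.mul (i2.mul i3)).mono (Nat.zero_le _)).cmul 6).add
           (((i3.mul i2).mono (Nat.zero_le _)).cmul (-2))).mul Od3))))).congr ?_
    intro m
    rw [et, ea2, ea1]
    push_cast
    rw [show (m:ℝ)+2+1 = m+3 by ring, show (m:ℝ)+1+1 = m+2 by ring]
    have := nz2 m
    have := nz3 m
    field_simp
    ring
  have Od4 : OO 4 (fun m => d m - 4 * a m * (((m:ℝ)+1)⁻¹^2 * ((m:ℝ)+2)⁻¹)) := by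
    refine (i2.mul (Ot3.sub Ou3)).congr ?_
    intro m; rw [ed]; ring
  set c : ℕ → ℝ := fun m => a m * (1 + 2 * ((m:ℝ)+1)⁻¹^2) with hc
  have Tinv : Tendsto (fun m : ℕ => ((m:ℝ)+1)⁻¹) atTop (𝓝 0) := by
    simpa [one_div] using (tendsto_one_div_add_atTop_nhds_zero_nat (𝕜 := ℝ))
  have hcL : Tendsto c atTop (𝓝 L) := by
    have := hL.mul (((Tinv.pow 2).const_mul 2).const_add 1)
    simpa [hc] using this
  have Oc : OO 4 (fun m => c (m+1) - c m) := by
    have O2 : OO 0 (fun m => (2:ℝ)) := OO.const 2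
    refine (Od4.add (((((i2.mul i2).cmul 2).mul Od3).mono (show 4 ≤ 1+1+3 by norm_num)).add
      (((i1.mul (i1.mul (i2.mul i2))).mul Oa).cmul 2))).congr ?_
    intro m
    simp only [hc]
    rw [ea1]
    push_cast
    rw [show (m:ℝ)+1+1 = m+2 by ring]
    have := nz1 m
    have := nz2 m
    field_simp
    ring
  have Oc3 := OO.tail hcL Oc
  have Oa2 : OO 2 (fun m => a m - L) := by
    refine ((Oc3.mono (show 2 ≤ 3 by norm_num)).add (((i1.mul i1).mul Oa).cmul (-2))).congr ?_
    intro m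
    simp only [hc]
    ring
  refine (Oc3.add (((i1.mul i1).mul Oa2).mono (show 3 ≤ 1+1+2 by norm_num) |>.cmul (-2))).congr ?_
  intro m
  simp only [hc]
  have := nz1 m
  field_simp
  ring

end SC
end

section
open Finset Filter Topology Polynomial
namespace SC

lemma cesaro_rec (y c : ℕ → ℝ) (L : ℝ) (j : ℕ) (hc : Tendsto c atTop (𝓝 L))
    (h : ∀ m : ℕ, ((m:ℝ)+2) * y (m+1) = ((m:ℝ)+2-((j:ℝ)+1)) * y m + c m) :
    Tendsto y atTop (𝓝 (L / ((j:ℝ)+1))) := by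
  set l := L / ((j:ℝ)+1) with hl
  have hlL : L = l * ((j:ℝ)+1) := by rw [hl]; field_simp
  have step : ∀ m : ℕ, j ≤ m → ((m:ℝ)+2) * |y (m+1) - l| ≤ ((m:ℝ)+1) * |y m - l| + |c m - L| := by
    intro m hm
    have hm' : (j:ℝ) ≤ m := by exact_mod_cast hm
    have e : ((m:ℝ)+2) * (y (m+1) - l) = ((m:ℝ)+1-j) * (y m - l) + (c m - L) := by
      rw [hlL]; linear_combination h m
    have e2 : ((m:ℝ)+2) * |y (m+1) - l| = |((m:ℝ)+2) * (y (m+1) - l)| := by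
      rw [abs_mul, abs_of_pos (show (0:ℝ) < (m:ℝ)+2 by positivity)]
    rw [e2, e]
    refine (abs_add_le _ _).trans ?_
    rw [abs_mul, abs_of_nonneg (by linarith)]
    have := mul_nonneg (Nat.cast_nonneg (α := ℝ) j) (abs_nonneg (y m - l))
    linarith
  have bound : ∀ m : ℕ, j ≤ m → ((m:ℝ)+1) * |y m - l| ≤
      ((j:ℝ)+1) * |y j - l| + ∑ k ∈ range m, |c k - L| := by
    intro m hm
    induction m, hm using Nat.le_induction with
    | base =>
      have : 0 ≤ ∑ k ∈ range j, |c k - L| := Finset.sum_nonneg (fun _ _ => abs_nonneg _)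
      linarith
    | succ m hm ih =>
      rw [Finset.sum_range_succ]
      push_cast
      have := step m hm
      rw [show (m:ℝ)+1+1 = m+2 by ring]
      linarith
  have hc0 : Tendsto (fun k => |c k - L|) atTop (𝓝 0) := by
    have := (hc.sub_const L).abs
    simpa using this
  have ces := hc0.cesaro
  have z : Tendsto (fun m : ℕ => (m:ℝ)⁻¹ * (((j:ℝ)+1) * |y j - l|) +
      (m:ℝ)⁻¹ * ∑ k ∈ range m, |c k - L|) atTop (𝓝 0) := by
    have := (tendsto_inv_atTop_nhds_zero_nat (𝕜 := ℝ)).mul_const (((j:ℝ)+1) * |y j - l|)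
    simpa using this.add ces
  have : Tendsto (fun m => y m - l) atTop (𝓝 0) := by
    apply squeeze_zero_norm' _ z
    filter_upwards [eventually_ge_atTop (j+1)] with m hm
    have hm0 : (0:ℝ) < m := by exact_mod_cast (by omega : 0 < m)
    rw [Real.norm_eq_abs, ← mul_add, ← div_eq_inv_mul, le_div_iff₀ hm0]
    have := bound m (by omega)
    nlinarith [abs_nonneg (y m - l)]
  have := this.add_const l
  simpa using this

noncomputable def xx (j m : ℕ) : ℝ := (PP m).coeff j / ((m+1).factorial : ℝ)
noncomputable def zz (j m : ℕ) : ℝ := (UU m).coeff j / ((m+1).factorial : ℝ)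

lemma fact_succ (m : ℕ) : ((m+1+1).factorial : ℝ) = ((m:ℝ)+2) * ((m+1).factorial : ℝ) := by
  rw [Nat.factorial_succ (m+1)]; push_cast; ring

lemma xx0 (m : ℕ) : ((m:ℝ)+2) * xx 0 (m+1) = ((m:ℝ)+2) * xx 0 m := by
  have := congrArg (fun p => coeff p 0) (PP_succ m)
  simp [mul_coeff_zero] at this
  have hf : ((m+1).factorial : ℝ) ≠ 0 := by positivity
  have h2 : (m:ℝ)+2 ≠ 0 := by positivity
  unfold xx
  rw [this, fact_succ]
  field_simp

lemma coeffX2 (p : ℝ[X]) (j : ℕ) : (X^2 * p).coeff (j+2) = p.coeff j := by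
  rw [mul_comm, coeff_mul_X_pow]

lemma expand (m : ℕ) : PP (m+1) = C ((m:ℝ)+2) * PP m + C 2 * (X * PP m) - X * derivative (PP m)
    - X^2 * UU m := by
  rw [PP_succ]
  simp only [map_add, map_ofNat, map_natCast]
  ring

lemma xx1 (m : ℕ) : ((m:ℝ)+2) * xx 1 (m+1) = ((m:ℝ)+2-(((0:ℕ):ℝ)+1)) * xx 1 m + 2 * xx 0 m := by
  have := congrArg (fun p => coeff p 1) (expand m)
  simp only [coeff_sub, coeff_add, coeff_C_mul] at this
  rw [show X^2 * UU m = X * (X * UU m) by ring] at this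
  rw [coeff_X_mul _ 0, coeff_X_mul _ 0, coeff_X_mul _ 0, coeff_derivative] at this
  simp at this
  have hf : ((m+1).factorial : ℝ) ≠ 0 := by positivity
  have h2 : (m:ℝ)+2 ≠ 0 := by positivity
  unfold xx
  rw [this, fact_succ]
  field_simp
  push_cast
  ring

lemma xx2 (j m : ℕ) : ((m:ℝ)+2) * xx (j+2) (m+1) =
    ((m:ℝ)+2-(((j+1:ℕ):ℝ)+1)) * xx (j+2) m + (2 * xx (j+1) m - zz j m) := by
  have := congrArg (fun p => coeff p (j+2)) (expand m)
  simp only [coeff_sub, coeff_add, coeff_C_mul, coeffX2] at this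
  rw [coeff_X_mul _ (j+1), coeff_X_mul _ (j+1), coeff_derivative] at this
  have hf : ((m+1).factorial : ℝ) ≠ 0 := by positivity
  have h2 : (m:ℝ)+2 ≠ 0 := by positivity
  unfold xx zz
  rw [this, fact_succ]
  push_cast
  field_simp
  ring

lemma expandU (m : ℕ) : UU (m+1) = C 2 * PP m - X * UU m := by
  rw [UU_succ]
  simp only [map_ofNat]

lemma zz0 (m : ℕ) : zz 0 (m+1) = ((m:ℝ)+2)⁻¹ * (2 * xx 0 m) := by
  have := congrArg (fun p => coeff p 0) (expandU m)
  simp at this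
  have hf : ((m+1).factorial : ℝ) ≠ 0 := by positivity
  have h2 : (m:ℝ)+2 ≠ 0 := by positivity
  unfold xx zz
  rw [this, fact_succ]
  field_simp

lemma zz1 (j m : ℕ) : zz (j+1) (m+1) = ((m:ℝ)+2)⁻¹ * (2 * xx (j+1) m - zz j m) := by
  have := congrArg (fun p => coeff p (j+1)) (expandU m)
  simp only [coeff_sub, coeff_C_mul, coeff_X_mul] at this
  have hf : ((m+1).factorial : ℝ) ≠ 0 := by positivity
  have h2 : (m:ℝ)+2 ≠ 0 := by positivity
  unfold xx zz
  rw [this, fact_succ]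
  field_simp

lemma tinv2 : Tendsto (fun m : ℕ => ((m:ℝ)+2)⁻¹) atTop (𝓝 0) := by
  have := (tendsto_add_atTop_iff_nat 2).mpr (tendsto_inv_atTop_nhds_zero_nat (𝕜 := ℝ))
  simpa using this

lemma xx0_eq (m : ℕ) : xx 0 m = 1 := by
  induction m with
  | zero => simp [xx, PP_zero]
  | succ m ih =>
    have := xx0 m
    have h2 : (m:ℝ)+2 ≠ 0 := by positivity
    rw [ih] at this
    exact mul_left_cancel₀ h2 this

lemma lim_all (j : ℕ) : Tendsto (xx j) atTop (𝓝 (2^j / (j.factorial : ℝ))) ∧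
    Tendsto (xx (j+1)) atTop (𝓝 (2^(j+1) / ((j+1).factorial : ℝ))) ∧
    Tendsto (zz j) atTop (𝓝 0) := by
  induction j with
  | zero =>
    have h0 : Tendsto (xx 0) atTop (𝓝 1) := by
      rw [show xx 0 = fun _ => (1:ℝ) from funext xx0_eq]; exact tendsto_const_nhds
    refine ⟨by simpa using h0, ?_, ?_⟩
    · have := cesaro_rec (xx 1) (fun m => 2 * xx 0 m) (2 * 1) 0 (h0.const_mul 2) xx1
      simpa using this
    · rw [← tendsto_add_atTop_iff_nat 1]
      have := tinv2.mul (h0.const_mul 2)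
      simp only [zero_mul] at this
      exact this.congr (fun m => (zz0 m).symm)
  | succ j ih =>
    obtain ⟨h0, h1, hz⟩ := ih
    refine ⟨h1, ?_, ?_⟩
    · have := cesaro_rec (xx (j+2)) _ _ (j+1) ((h1.const_mul 2).sub hz) (xx2 j)
      convert this using 2
      rw [Nat.factorial_succ (j+1)]
      push_cast
      have : ((j+1).factorial : ℝ) ≠ 0 := by positivity
      field_simp
      ring
    · rw [← tendsto_add_atTop_iff_nat 1]
      have := tinv2.mul ((h1.const_mul 2).sub hz)
      simp only [zero_mul] at this
      exact this.congr (fun m => (zz1 j m).symm)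

lemma noAdj_iff {m : ℕ} (π : Equiv.Perm (Fin (m+1))) : NoAdj π ↔ adj π = 0 := by
  unfold adj
  rw [Finset.card_eq_zero, Finset.eq_empty_iff_forall_notMem]
  constructor
  · intro h i hi
    rw [mem_adjS] at hi
    exact h _ _ (by simp) hi
  · intro h x y hxy hh
    have hx : x.val < m := by have := y.isLt; omega
    apply h ⟨x.val, hx⟩
    rw [mem_adjS]
    have e1 : (⟨x.val, hx⟩ : Fin m).castSucc = x := rfl
    have e2 : (⟨x.val, hx⟩ : Fin m).succ = y := Fin.ext hxy.symm
    rw [e1, e2]; exact hh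

lemma eval_PP (m : ℕ) : (PP m).eval (-1) = cA (m+1) := by
  classical
  unfold PP cA
  rw [eval_finsetSum, Nat.card_eq_fintype_card, Fintype.card_subtype, Finset.card_filter]
  push_cast
  refine Finset.sum_congr rfl (fun π _ => ?_)
  rw [noAdj_iff]
  by_cases h : adj π = 0
  · simp [h]
  · simp [h]

lemma bonf (k J : ℕ) : |(if k = 0 then (1:ℝ) else 0) - ∑ j ∈ range J, (-1)^j * (k.choose j : ℝ)|
    ≤ (k.choose J : ℝ) := by
  rcases J with _ | J
  · split_ifs <;> simp
  rcases k with _ | k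
  · rw [Finset.sum_range_succ']
    simp
  · have h : ∑ j ∈ range (J+1), (-1)^j * ((k+1).choose j : ℝ) = (-1)^J * (k.choose J : ℝ) := by
      induction J with
      | zero => simp
      | succ J ih =>
        rw [Finset.sum_range_succ, ih, Nat.choose_succ_succ, pow_succ]
        push_cast; ring
    rw [h]
    simp [abs_mul, Nat.choose_succ_succ]

lemma coeff_PP (m j : ℕ) : (PP m).coeff j = ∑ π : Equiv.Perm (Fin (m+1)), ((adj π).choose j : ℝ) := by
  unfold PP
  rw [finsetSum_coeff]
  refine Finset.sum_congr rfl (fun π _ => ?_)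
  rw [coeff_X_add_one_pow]

lemma bonf_A (m J : ℕ) : |(cA (m+1) : ℝ) / ((m+1).factorial : ℝ) - ∑ j ∈ range J, (-1)^j * xx j m|
    ≤ xx J m := by
  have hf : (0:ℝ) < ((m+1).factorial : ℝ) := by positivity
  unfold xx
  rw [le_div_iff₀ hf, ← abs_of_pos hf, ← abs_mul, abs_of_pos hf, sub_mul, div_mul_cancel₀ _ hf.ne',
    Finset.sum_mul]
  have e : ∀ j ∈ range J, (-1:ℝ)^j * ((PP m).coeff j / ((m+1).factorial : ℝ)) * ((m+1).factorial : ℝ)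
      = ∑ π : Equiv.Perm (Fin (m+1)), (-1)^j * ((adj π).choose j : ℝ) := by
    intro j _
    rw [mul_assoc, div_mul_cancel₀ _ hf.ne', coeff_PP, Finset.mul_sum]
  rw [Finset.sum_congr rfl e, Finset.sum_comm, ← eval_PP, coeff_PP]
  have e2 : (PP m).eval (-1) = ∑ π : Equiv.Perm (Fin (m+1)), (if adj π = 0 then (1:ℝ) else 0) := by
    unfold PP
    rw [eval_finsetSum]
    refine Finset.sum_congr rfl (fun π _ => ?_)
    by_cases h : adj π = 0
    · simp [h]
    · simp [h]
  rw [e2, ← Finset.sum_sub_distrib]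
  exact (Finset.abs_sum_le_sum_abs _ _).trans (Finset.sum_le_sum (fun π _ => bonf _ _))

lemma lim_A : Tendsto (fun m => (cA (m+1) : ℝ) / ((m+1).factorial : ℝ)) atTop
    (𝓝 (Real.exp (-2))) := by
  have hs : HasSum (fun j : ℕ => (-2:ℝ)^j / (j.factorial : ℝ)) (Real.exp (-2)) := by
    rw [Real.exp_eq_exp_ℝ]
    exact NormedSpace.expSeries_div_hasSum_exp (-2 : ℝ)
  have hs1 := hs.tendsto_sum_nat
  have hs2 : Tendsto (fun j : ℕ => (2:ℝ)^j / (j.factorial : ℝ)) atTop (𝓝 0) :=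
    FloorSemiring.tendsto_pow_div_factorial_atTop 2
  rw [Metric.tendsto_atTop]
  intro ε hε
  have ev1 := (Metric.tendsto_atTop.mp hs1) (ε/4) (by positivity)
  have ev2 := (Metric.tendsto_atTop.mp hs2) (ε/4) (by positivity)
  obtain ⟨N1, hN1⟩ := ev1
  obtain ⟨N2, hN2⟩ := ev2
  set J := max N1 N2
  have a1 := hN1 J (le_max_left _ _)
  have a2 := hN2 J (le_max_right _ _)
  have t1 : Tendsto (fun m => ∑ j ∈ range J, (-1)^j * xx j m) atTop
      (𝓝 (∑ j ∈ range J, (-2:ℝ)^j / (j.factorial : ℝ))) := by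
    apply tendsto_finsetSum
    intro j _
    have := (lim_all j).1.const_mul ((-1)^j)
    convert this using 2
    rw [← mul_div_assoc, ← mul_pow]; norm_num
  obtain ⟨M1, hM1⟩ := (Metric.tendsto_atTop.mp t1) (ε/4) (by positivity)
  obtain ⟨M2, hM2⟩ := (Metric.tendsto_atTop.mp (lim_all J).1) (ε/4) (by positivity)
  refine ⟨max M1 M2, fun m hm => ?_⟩
  have b1 := hM1 m ((le_max_left _ _).trans hm)
  have b2 := hM2 m ((le_max_right _ _).trans hm)
  have b3 := bonf_A m J
  rw [Real.dist_eq] at *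
  rw [abs_lt] at *
  rw [abs_le] at b3
  constructor <;> linarith [b3.1, b3.2, a1.1, a1.2, a2.1, a2.2, b1.1, b1.2, b2.1, b2.2]

lemma cA_le (n : ℕ) : cA n ≤ n.factorial := by
  classical
  unfold cA
  rw [Nat.card_eq_fintype_card]
  refine (Fintype.card_subtype_le _).trans ?_
  rw [Fintype.card_perm, Fintype.card_fin]

theorem cA_asym : OO 3 (fun m => (cA (m+1) : ℝ) / ((m+1).factorial : ℝ)
    - Real.exp (-2) * (1 - 2 / ((m:ℝ)+1)^2)) := by
  apply asym _ (fun m => (derivative (PP m)).eval (-1) / ((m+1).factorial : ℝ))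
    (fun m => (UU m).eval (-1) / ((m+1).factorial : ℝ)) _ _ _ _ _ _ _ _ _ lim_A
  · intro m; positivity
  · intro m
    rw [div_le_one (by positivity)]
    exact_mod_cast cA_le _
  · intro m
    have := congrArg (eval (-1)) (PP_succ m)
    simp at this
    have hf : ((m+1).factorial : ℝ) ≠ 0 := by positivity
    have h2 : (m:ℝ)+2 ≠ 0 := by positivity
    rw [← eval_PP, ← eval_PP, this, fact_succ]
    field_simp
  · intro m
    have := congrArg (eval (-1)) (PU_rel m).1
    simp at this
    have hf : ((m+1).factorial : ℝ) ≠ 0 := by positivity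
    have h2 : (m:ℝ)+2 ≠ 0 := by positivity
    have h3 : (m:ℝ)+3 ≠ 0 := by positivity
    have f2 := fact_succ (m+1)
    push_cast at f2
    rw [show (m:ℝ)+1+2 = m+3 by ring] at f2
    rw [← eval_PP, show m+2+1 = m+1+1+1 by ring, f2, fact_succ]
    field_simp
    linear_combination this
  · intro m
    have := congrArg (eval (-1)) (UU_succ m)
    simp at this
    have hf : ((m+1).factorial : ℝ) ≠ 0 := by positivity
    have h2 : (m:ℝ)+2 ≠ 0 := by positivity
    rw [← eval_PP, this, fact_succ]
    field_simp
  · simp [PP_zero]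
  · rw [PP_succ 0, PP_zero, UU_zero]
    simp
  · simp [UU_zero]

end SC
end

section
open Finset
namespace SC

noncomputable def FS {α : Type*} [Fintype α] (p : α → Prop) : Finset α :=
  @Finset.filter α p (Classical.decPred p) univ

lemma mem_FS {α : Type*} [Fintype α] {p : α → Prop} {x : α} : x ∈ FS p ↔ p x := by
  classical
  unfold FS
  simp only [Finset.mem_filter, mem_univ, true_and]

noncomputable def cnt {α : Type*} [Fintype α] (p : α → Prop) : ℕ := (FS p).card

lemma natCard_eq {α : Type*} [Fintype α] (p : α → Prop) : Nat.card {x // p x} = cnt p := by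
  classical
  unfold cnt
  rw [Nat.card_eq_fintype_card, Fintype.card_of_subtype]
  intro x
  exact mem_FS

lemma cnt_congr {α : Type*} [Fintype α] {p q : α → Prop} (h : ∀ x, p x ↔ q x) : cnt p = cnt q := by
  have : p = q := funext fun x => propext (h x)
  rw [this]

lemma cnt_mono {α : Type*} [Fintype α] {p q : α → Prop} (h : ∀ x, p x → q x) : cnt p ≤ cnt q := by
  apply Finset.card_le_card
  intro x hx
  rw [mem_FS] at *
  exact h x hx

lemma cnt_or_and {α : Type*} [Fintype α] (p q : α → Prop) :
    cnt (fun x => p x ∨ q x) + cnt (fun x => p x ∧ q x) = cnt p + cnt q := by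
  classical
  unfold cnt
  rw [← Finset.card_union_add_card_inter (FS p) (FS q)]
  congr 2
  · ext x; simp only [mem_union, mem_FS]
  · ext x; simp only [mem_inter, mem_FS]

lemma cnt_false {α : Type*} [Fintype α] {p : α → Prop} (h : ∀ x, ¬ p x) : cnt p = 0 := by
  unfold cnt
  rw [Finset.card_eq_zero, Finset.eq_empty_iff_forall_notMem]
  intro x; rw [mem_FS]; exact h x

lemma cnt_split {α : Type*} [Fintype α] (p q : α → Prop) :
    cnt (fun x => p x ∧ q x) + cnt (fun x => p x ∧ ¬ q x) = cnt p := by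
  have := cnt_or_and (fun x => p x ∧ q x) (fun x => p x ∧ ¬ q x)
  rw [cnt_false (p := fun x => (p x ∧ q x) ∧ p x ∧ ¬ q x) (fun x => by tauto)] at this
  rw [← this, add_zero]
  apply cnt_congr
  intro x; tauto

lemma cnt_or_le {α : Type*} [Fintype α] (p q : α → Prop) :
    cnt (fun x => p x ∨ q x) ≤ cnt p + cnt q := by
  have := cnt_or_and p q
  omega

lemma cnt_le_inj {α β : Type*} [Fintype α] [Fintype β] {p : α → Prop} {q : β → Prop}
    (f : α → β) (hf : ∀ x, p x → q (f x)) (hi : ∀ x y, p x → p y → f x = f y → x = y) :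
    cnt p ≤ cnt q := by
  unfold cnt
  apply Finset.card_le_card_of_injOn f
  · intro x hx
    have hx' : x ∈ FS p := hx
    have : f x ∈ FS q := mem_FS.2 (hf x (mem_FS.1 hx'))
    exact this
  · intro x hx y hy h
    have hx' : x ∈ FS p := hx
    have hy' : y ∈ FS p := hy
    exact hi x y (mem_FS.1 hx') (mem_FS.1 hy') h

lemma cnt_exists_le {α ι : Type*} [Fintype α] (s : Finset ι) (p : ι → α → Prop) :
    cnt (fun x => ∃ i ∈ s, p i x) ≤ ∑ i ∈ s, cnt (p i) := by
  classical
  have : FS (fun x => ∃ i ∈ s, p i x) = s.biUnion (fun i => FS (p i)) := by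
    ext x; simp only [mem_FS, mem_biUnion]
  unfold cnt
  rw [this]
  exact Finset.card_biUnion_le

lemma cnt_le_card {α : Type*} [Fintype α] (p : α → Prop) : cnt p ≤ Fintype.card α :=
  Finset.card_le_univ _

lemma adj_insP_zero {m : ℕ} (τ : Equiv.Perm (Fin (m+1))) :
    NoAdj (insP 0 τ) ↔ NoAdj τ ∧ τ 0 ≠ 0 := by
  have h := adj_insP 0 τ
  have h1 : (0 : Fin (m+2)) ∉ brS τ := by
    simp only [brS, mem_image, not_exists, not_and]
    intro i hi h
    rw [mem_adjS] at hi
    have := congrArg Fin.val h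
    rw [Fin.val_castSucc, max_val] at this
    simp only [Fin.val_zero] at this
    omega
  have h2 : (0 : Fin (m+2)) ∈ crS τ ↔ τ 0 = 0 := by
    simp only [crS, mem_insert, mem_singleton, Fin.ext_iff, Fin.val_castSucc, Fin.val_succ,
      Fin.val_zero]
    omega
  rw [noAdj_iff, noAdj_iff]
  simp only [h1, h2, if_false] at h
  split_ifs at h with h3
  · simp [h3]; omega
  · simp [h3]; omega

lemma insP_last {m : ℕ} (τ : Equiv.Perm (Fin (m+1))) :
    insP 0 τ (Fin.last (m+1)) = Fin.last (m+1) ↔ τ (Fin.last m) = Fin.last m := by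
  rw [← Fin.succ_last, insP_succ, Fin.succAbove_zero, Fin.succ_inj]

lemma count_zero {m : ℕ} (p : Equiv.Perm (Fin (m+2)) → Prop) :
    cnt (fun π : Equiv.Perm (Fin (m+2)) => π 0 = 0 ∧ p π) =
    cnt (fun τ : Equiv.Perm (Fin (m+1)) => p (insP 0 τ)) := by
  symm
  unfold cnt
  apply Finset.card_bij (fun τ _ => insP 0 τ)
  · intro τ h
    rw [mem_FS] at h ⊢
    exact ⟨insP_zero _ _, h⟩
  · intro τ _ τ' _ h
    have := (insP_bij m).1 (a₁ := (0, τ)) (a₂ := (0, τ')) h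
    exact (Prod.ext_iff.mp this).2
  · intro π h
    rw [mem_FS] at h
    obtain ⟨⟨v, τ⟩, hq⟩ := (insP_bij m).2 π
    simp only at hq
    have : v = 0 := by rw [← insP_zero v τ, hq, h.1]
    subst this
    refine ⟨τ, ?_, hq⟩
    rw [mem_FS, hq]; exact h.2

noncomputable def cB (m : ℕ) : ℕ :=
  cnt (fun π : Equiv.Perm (Fin (m+1)) => π 0 = 0 ∧ NoAdj π)
noncomputable def cBl (m : ℕ) : ℕ :=
  cnt (fun π : Equiv.Perm (Fin (m+1)) => π (Fin.last m) = Fin.last m ∧ NoAdj π)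
noncomputable def cC (m : ℕ) : ℕ :=
  cnt (fun π : Equiv.Perm (Fin (m+1)) => π 0 = 0 ∧
    (π (Fin.last m) = Fin.last m ∧ NoAdj π))

lemma cA_eq (n : ℕ) : cA n = cnt (fun π : Equiv.Perm (Fin n) => NoAdj π) := natCard_eq _

lemma cB_rec (m : ℕ) : cB (m+1) + cB m = cA (m+1) := by
  unfold cB
  rw [count_zero, cA_eq, ← cnt_split (fun π : Equiv.Perm (Fin (m+1)) => NoAdj π) (fun τ => τ 0 ≠ 0)]
  congr 1
  · exact cnt_congr fun τ => adj_insP_zero τ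
  · exact cnt_congr fun τ => by rw [not_not, and_comm]

lemma cC_rec (m : ℕ) : cC (m+1) + cC m = cBl m := by
  unfold cC cBl
  rw [count_zero, ← cnt_split (fun π : Equiv.Perm (Fin (m+1)) =>
    π (Fin.last m) = Fin.last m ∧ NoAdj π) (fun τ => τ 0 ≠ 0)]
  congr 1
  · exact cnt_congr fun τ => by rw [adj_insP_zero, insP_last, and_assoc]
  · exact cnt_congr fun τ => by rw [not_not, and_comm]

lemma noAdj_mul_rev {n : ℕ} (π : Equiv.Perm (Fin n)) (h : NoAdj π) : NoAdj (π * Fin.revPerm) := by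
  intro x y hxy
  have := h (Fin.rev y) (Fin.rev x) (by simp only [Fin.val_rev]; omega)
  simp only [Equiv.Perm.mul_apply, Fin.revPerm_apply]
  tauto

lemma noAdj_rev_mul {n : ℕ} (π : Equiv.Perm (Fin n)) (h : NoAdj π) : NoAdj (Fin.revPerm * π) := by
  intro x y hxy
  have := h x y hxy
  simp only [Equiv.Perm.mul_apply, Fin.revPerm_apply, Fin.val_rev]
  omega

lemma rev_rev {n : ℕ} : (Fin.revPerm * Fin.revPerm : Equiv.Perm (Fin n)) = 1 := by
  ext x; simp

lemma noAdj_mul_rev_iff {n : ℕ} (π : Equiv.Perm (Fin n)) : NoAdj (π * Fin.revPerm) ↔ NoAdj π := by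
  refine ⟨fun h => ?_, noAdj_mul_rev π⟩
  have := noAdj_mul_rev _ h
  rwa [mul_assoc, rev_rev, mul_one] at this

lemma noAdj_rev_mul_iff {n : ℕ} (π : Equiv.Perm (Fin n)) : NoAdj (Fin.revPerm * π) ↔ NoAdj π := by
  refine ⟨fun h => ?_, noAdj_rev_mul π⟩
  have := noAdj_rev_mul _ h
  rwa [← mul_assoc, rev_rev, one_mul] at this

lemma count_mul_rev {n : ℕ} (p : Equiv.Perm (Fin n) → Prop) :
    cnt p = cnt (fun π => p (π * Fin.revPerm)) := by
  apply le_antisymm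
  · apply cnt_le_inj (fun π => π * Fin.revPerm)
    · intro π h; rwa [mul_assoc, rev_rev, mul_one]
    · intro a b _ _ h; exact mul_right_cancel h
  · apply cnt_le_inj (fun π => π * Fin.revPerm)
    · intro π h; exact h
    · intro a b _ _ h; exact mul_right_cancel h

lemma count_rev_mul {n : ℕ} (p : Equiv.Perm (Fin n) → Prop) :
    cnt p = cnt (fun π => p (Fin.revPerm * π)) := by
  apply le_antisymm
  · apply cnt_le_inj (fun π => Fin.revPerm * π)
    · intro π h; rwa [← mul_assoc, rev_rev, one_mul]
    · intro a b _ _ h; exact mul_left_cancel h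
  · apply cnt_le_inj (fun π => Fin.revPerm * π)
    · intro π h; exact h
    · intro a b _ _ h; exact mul_left_cancel h

lemma rev_eq_last {m : ℕ} (x : Fin (m+1)) : Fin.rev x = Fin.last m ↔ x = 0 := by
  rw [Fin.rev_eq_iff, Fin.rev_last]

lemma rev_eq_zero {m : ℕ} (x : Fin (m+1)) : Fin.rev x = 0 ↔ x = Fin.last m := by
  rw [Fin.rev_eq_iff, Fin.rev_zero]

lemma cB_0l (m : ℕ) : cnt (fun π : Equiv.Perm (Fin (m+1)) =>
    π 0 = Fin.last m ∧ NoAdj π) = cB m := by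
  unfold cB
  rw [count_rev_mul]
  apply cnt_congr
  intro π
  rw [noAdj_rev_mul_iff, Equiv.Perm.mul_apply, Fin.revPerm_apply, rev_eq_last]

lemma cB_l0 (m : ℕ) : cnt (fun π : Equiv.Perm (Fin (m+1)) =>
    π (Fin.last m) = 0 ∧ NoAdj π) = cB m := by
  unfold cB
  rw [count_mul_rev]
  apply cnt_congr
  intro π
  rw [noAdj_mul_rev_iff, Equiv.Perm.mul_apply, Fin.revPerm_apply, Fin.rev_last]

lemma cBl_eq (m : ℕ) : cBl m = cB m := by
  unfold cBl
  rw [← cB_l0, count_rev_mul]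
  apply cnt_congr
  intro π
  rw [noAdj_rev_mul_iff, Equiv.Perm.mul_apply, Fin.revPerm_apply, rev_eq_last]

lemma cC_anti (m : ℕ) : cnt (fun π : Equiv.Perm (Fin (m+1)) => π 0 = Fin.last m ∧
    (π (Fin.last m) = 0 ∧ NoAdj π)) = cC m := by
  unfold cC
  rw [count_rev_mul]
  apply cnt_congr
  intro π
  rw [noAdj_rev_mul_iff, Equiv.Perm.mul_apply, Fin.revPerm_apply, rev_eq_last,
    Equiv.Perm.mul_apply, Fin.revPerm_apply, rev_eq_zero]

def Cor {m : ℕ} (π : Equiv.Perm (Fin (m+1))) : Prop :=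
  (π 0 = 0 ∨ π (Fin.last m) = Fin.last m) ∨ (π 0 = Fin.last m ∨ π (Fin.last m) = 0)

noncomputable def cCor (m : ℕ) : ℕ :=
  cnt (fun π : Equiv.Perm (Fin (m+1)) => Cor π ∧ NoAdj π)

lemma cCor_eq (m : ℕ) : cCor (m+1) + 2 * cC (m+1) = 4 * cB (m+1) := by
  have h01 : (0 : Fin (m+2)) ≠ Fin.last (m+1) := by
    intro h; have := congrArg Fin.val h; simp at this
  have e1 := cnt_or_and
    (fun π : Equiv.Perm (Fin (m+2)) => π 0 = 0 ∧ NoAdj π)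
    (fun π : Equiv.Perm (Fin (m+2)) => π (Fin.last (m+1)) = Fin.last (m+1) ∧ NoAdj π)
  have e2 := cnt_or_and
    (fun π : Equiv.Perm (Fin (m+2)) => π 0 = Fin.last (m+1) ∧ NoAdj π)
    (fun π : Equiv.Perm (Fin (m+2)) => π (Fin.last (m+1)) = 0 ∧ NoAdj π)
  have e3 := cnt_or_and
    (fun π : Equiv.Perm (Fin (m+2)) => (π 0 = 0 ∧ NoAdj π) ∨
      (π (Fin.last (m+1)) = Fin.last (m+1) ∧ NoAdj π))
    (fun π : Equiv.Perm (Fin (m+2)) => (π 0 = Fin.last (m+1) ∧ NoAdj π) ∨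
      (π (Fin.last (m+1)) = 0 ∧ NoAdj π))
  have e4 : cnt (fun π : Equiv.Perm (Fin (m+2)) => ((π 0 = 0 ∧ NoAdj π) ∨
      (π (Fin.last (m+1)) = Fin.last (m+1) ∧ NoAdj π)) ∧ ((π 0 = Fin.last (m+1) ∧ NoAdj π) ∨
      (π (Fin.last (m+1)) = 0 ∧ NoAdj π))) = 0 := by
    apply cnt_false
    intro π
    rintro ⟨⟨h1, _⟩ | ⟨h1, _⟩, ⟨h2, _⟩ | ⟨h2, _⟩⟩
    · exact h01 (h1.symm.trans h2)
    · exact h01 (π.injective (h1.trans h2.symm))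
    · exact h01 (π.injective (h2.trans h1.symm))
    · exact h01 (h2.symm.trans h1)
  have hu : cCor (m+1) = cnt (fun π : Equiv.Perm (Fin (m+2)) => ((π 0 = 0 ∧ NoAdj π) ∨
      (π (Fin.last (m+1)) = Fin.last (m+1) ∧ NoAdj π)) ∨ ((π 0 = Fin.last (m+1) ∧ NoAdj π) ∨
      (π (Fin.last (m+1)) = 0 ∧ NoAdj π))) := by
    apply cnt_congr
    intro π
    unfold Cor
    rw [or_and_right, or_and_right, or_and_right]
  rw [cnt_congr (p := fun π : Equiv.Perm (Fin (m+2)) => (π 0 = 0 ∧ NoAdj π) ∧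
      (π (Fin.last (m+1)) = Fin.last (m+1) ∧ NoAdj π))
      (q := (fun π : Equiv.Perm (Fin (m+2)) => π 0 = 0 ∧
      (π (Fin.last (m+1)) = Fin.last (m+1) ∧ NoAdj π)))
      (fun π => ⟨fun h => ⟨h.1.1, h.2⟩, fun h => ⟨⟨h.1, h.2.2⟩, h.2⟩⟩)] at e1
  rw [cnt_congr (p := fun π : Equiv.Perm (Fin (m+2)) => (π 0 = Fin.last (m+1) ∧ NoAdj π) ∧
      (π (Fin.last (m+1)) = 0 ∧ NoAdj π))
      (q := (fun π : Equiv.Perm (Fin (m+2)) => π 0 = Fin.last (m+1) ∧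
      (π (Fin.last (m+1)) = 0 ∧ NoAdj π)))
      (fun π => ⟨fun h => ⟨h.1.1, h.2⟩, fun h => ⟨⟨h.1, h.2.2⟩, h.2⟩⟩), cC_anti, cB_l0, cB_0l] at e2
  have hl := cBl_eq (m+1)
  unfold cBl at hl
  rw [hl] at e1
  change _ + cC (m+1) = cB (m+1) + cB (m+1) at e1
  omega

lemma cB_le (m : ℕ) : cB m ≤ m.factorial := by
  rcases m with _ | m
  · unfold cB
    refine (cnt_le_card _).trans ?_
    simp
  · have := cB_rec m
    have := cA_le (m+1)
    omega

lemma cCor_asym (m : ℕ) : |(cCor (m+2) : ℝ) - (4 * cA (m+2) - 6 * cA (m+1))| ≤ 8 * (m.factorial : ℝ) := by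
  have h1 := cCor_eq (m+1)
  have h2 := cB_rec (m+1)
  have h3 := cB_rec m
  have h4 := cC_rec (m+1)
  have h5 := cC_rec m
  rw [cBl_eq] at h4 h5
  have h6 := cB_le m
  have hC : cC (m+1) ≤ m.factorial := by omega
  rify at *
  rw [abs_le]
  have := Nat.cast_nonneg (α := ℝ) (cC m)
  have := Nat.cast_nonneg (α := ℝ) (cC (m+1))
  have := Nat.cast_nonneg (α := ℝ) (cB m)
  constructor <;> linarith

end SC
end

section
open Finset
namespace SC

lemma cnt_color {n : ℕ} (c d : Fin n → Fin 3) :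
    cnt (fun π : Equiv.Perm (Fin n) => ∀ x, d (π x) = c x) ≤
      ∏ i, (Fintype.card {a // c a = i}).factorial := by
  by_cases h : ∃ π0 : Equiv.Perm (Fin n), ∀ x, d (π0 x) = c x
  · obtain ⟨π0, h0⟩ := h
    rw [← DomMulAct.stabilizer_card c, ← Nat.card_eq_fintype_card, natCard_eq]
    apply cnt_le_inj (fun π => π0⁻¹ * π)
    · intro π h
      funext x
      simp only [Function.comp, Equiv.Perm.mul_apply]
      have e : π0 (π0⁻¹ (π x)) = π x := π0.apply_symm_apply _
      rw [← h0, e, h]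
    · intro a b _ _ h
      exact mul_left_cancel h
  · rw [cnt_false]
    · exact Nat.zero_le _
    · intro π hπ; exact h ⟨π, hπ⟩

lemma mem_iff_of_maps {n : ℕ} (π : Equiv.Perm (Fin n)) (S T : Finset (Fin n)) (hc : T.card ≤ S.card)
    (h : ∀ x ∈ S, π x ∈ T) (x : Fin n) : π x ∈ T ↔ x ∈ S := by
  refine ⟨fun hx => ?_, h x⟩
  have : S.map π.toEmbedding = T := by
    apply Finset.eq_of_subset_of_card_le
    · intro y hy
      rw [mem_map] at hy
      obtain ⟨z, hz, rfl⟩ := hy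
      exact h z hz
    · rwa [card_map]
  rw [← this, mem_map] at hx
  obtain ⟨z, hz, hzx⟩ := hx
  rwa [← π.injective hzx]

lemma cnt_two {n : ℕ} (S T S' T' : Finset (Fin n)) (hc : T.card ≤ S.card) (hc' : T'.card ≤ S'.card)
    (hd : ∀ x ∈ S, x ∉ S') :
    cnt (fun π : Equiv.Perm (Fin n) => (∀ x ∈ S, π x ∈ T) ∧ (∀ x ∈ S', π x ∈ T')) ≤
      S.card.factorial * S'.card.factorial * (n - S.card - S'.card).factorial := by
  set c : Fin n → Fin 3 := fun x => if x ∈ S then 0 else if x ∈ S' then 1 else 2 with hcdef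
  set d : Fin n → Fin 3 := fun x => if x ∈ T then 0 else if x ∈ T' then 1 else 2 with hddef
  have h1 : cnt (fun π : Equiv.Perm (Fin n) => (∀ x ∈ S, π x ∈ T) ∧ (∀ x ∈ S', π x ∈ T')) ≤
      cnt (fun π : Equiv.Perm (Fin n) => ∀ x, d (π x) = c x) := by
    apply cnt_mono
    rintro π ⟨h, h'⟩ x
    simp only [hcdef, hddef, mem_iff_of_maps π S T hc h, mem_iff_of_maps π S' T' hc' h']
  refine h1.trans ((cnt_color c d).trans ?_)
  have k0 : Fintype.card {a // c a = 0} = S.card := by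
    apply Fintype.card_of_subtype
    intro x
    simp only [hcdef]
    split_ifs <;> simp_all
  have k1 : Fintype.card {a // c a = 1} = S'.card := by
    apply Fintype.card_of_subtype
    intro x
    simp only [hcdef]
    have := hd x
    split_ifs <;> simp_all
  have k2 : Fintype.card {a // c a = 2} = ((S ∪ S')ᶜ).card := by
    apply Fintype.card_of_subtype
    intro x
    simp only [hcdef]
    split_ifs <;> simp_all
  rw [Fin.prod_univ_three, k0, k1, k2, card_compl, Fintype.card_fin,
    Finset.card_union_of_disjoint (Finset.disjoint_left.2 hd), Nat.sub_sub]

/-- the window of positions `[i, i+k)` is mapped into `[a, a+k)` -/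
def HasBlk {n : ℕ} (π : Equiv.Perm (Fin n)) (k i a : ℕ) : Prop :=
  ∀ x : Fin n, i ≤ x.val → x.val < i + k → a ≤ (π x).val ∧ (π x).val < a + k

def win (n i k : ℕ) : Finset (Fin n) := univ.filter (fun x => i ≤ x.val ∧ x.val < i + k)

lemma mem_win {n i k : ℕ} (x : Fin n) : x ∈ win n i k ↔ i ≤ x.val ∧ x.val < i + k := by
  simp [win]

lemma win_card_le (n i k : ℕ) : (win n i k).card ≤ k := by
  have : (win n i k).map Fin.valEmbedding ⊆ Ico i (i+k) := by
    intro y hy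
    rw [mem_map] at hy
    obtain ⟨z, hz, rfl⟩ := hy
    rw [mem_win] at hz
    exact mem_Ico.2 hz
  have := card_le_card this
  rw [card_map, Nat.card_Ico] at this
  omega

lemma win_card (n i k : ℕ) (h : i + k ≤ n) : (win n i k).card = k := by
  have : (win n i k).map Fin.valEmbedding = Ico i (i+k) := by
    ext y
    rw [mem_map, mem_Ico]
    constructor
    · rintro ⟨z, hz, rfl⟩
      exact (mem_win z).1 hz
    · intro hy
      exact ⟨⟨y, by omega⟩, (mem_win _).2 hy, rfl⟩
  have := congrArg card this
  rw [card_map, Nat.card_Ico] at this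
  omega

lemma hasBlk_iff {n : ℕ} (π : Equiv.Perm (Fin n)) (k i a : ℕ) :
    HasBlk π k i a ↔ ∀ x ∈ win n i k, π x ∈ win n a k := by
  unfold HasBlk
  simp only [mem_win]
  exact ⟨fun h x hx => h x hx.1 hx.2, fun h x h1 h2 => h x ⟨h1, h2⟩⟩

lemma HasBlk.iff {n : ℕ} {π : Equiv.Perm (Fin n)} {k i a : ℕ} (h : HasBlk π k i a) (hi : i + k ≤ n)
    (x : Fin n) : (a ≤ (π x).val ∧ (π x).val < a + k) ↔ (i ≤ x.val ∧ x.val < i + k) := by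
  have := mem_iff_of_maps π (win n i k) (win n a k)
    (by rw [win_card n i k hi]; exact win_card_le _ _ _) ((hasBlk_iff _ _ _ _).1 h) x
  rwa [mem_win, mem_win] at this

lemma cnt_blk (n k i a : ℕ) (hi : i + k ≤ n) :
    cnt (fun π : Equiv.Perm (Fin n) => HasBlk π k i a) ≤ k.factorial * (n - k).factorial := by
  have := cnt_two (win n i k) (win n a k) ∅ ∅
    (by rw [win_card n i k hi]; exact win_card_le _ _ _) (by simp) (by simp)
  rw [win_card n i k hi] at this
  simp only [card_empty, Nat.factorial_zero, mul_one, Nat.sub_zero] at this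
  refine le_trans (cnt_mono ?_) this
  intro π h
  exact ⟨(hasBlk_iff _ _ _ _).1 h, by simp⟩

lemma cnt_blk2 (n k i a i' a' : ℕ) (hi : i + k ≤ i') (hi' : i' + k ≤ n) :
    cnt (fun π : Equiv.Perm (Fin n) => HasBlk π k i a ∧ HasBlk π k i' a') ≤
      k.factorial * k.factorial * (n - k - k).factorial := by
  have := cnt_two (win n i k) (win n a k) (win n i' k) (win n a' k)
    (by rw [win_card n i k (by omega)]; exact win_card_le _ _ _)
    (by rw [win_card n i' k (by omega)]; exact win_card_le _ _ _)
    (by intro x hx hx'; rw [mem_win] at hx hx'; omega)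
  rw [win_card n i k (by omega), win_card n i' k (by omega)] at this
  refine le_trans (cnt_mono ?_) this
  intro π h
  exact ⟨(hasBlk_iff _ _ _ _).1 h.1, (hasBlk_iff _ _ _ _).1 h.2⟩

lemma cnt_blk_pt (n k i a : ℕ) (hi : i + k ≤ n) (x y : Fin n) (hx : ¬ (i ≤ x.val ∧ x.val < i + k)) :
    cnt (fun π : Equiv.Perm (Fin n) => HasBlk π k i a ∧ π x = y) ≤
      k.factorial * (n - k - 1).factorial := by
  have := cnt_two (win n i k) (win n a k) {x} {y}
    (by rw [win_card n i k (by omega)]; exact win_card_le _ _ _)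
    (by simp)
    (by intro z hz hz'; rw [mem_win] at hz; rw [mem_singleton] at hz'; subst hz'; exact hx hz)
  rw [win_card n i k (by omega)] at this
  simp only [card_singleton, Nat.factorial_one, mul_one] at this
  refine le_trans (cnt_mono ?_) this
  intro π h
  refine ⟨(hasBlk_iff _ _ _ _).1 h.1, ?_⟩
  intro z hz
  rw [mem_singleton] at hz ⊢
  rw [hz]; exact h.2

/-! ### Middle-size blocks -/

def Mid {n : ℕ} (π : Equiv.Perm (Fin n)) : Prop :=
  ∃ k i a : ℕ, 5 ≤ k ∧ k + 3 ≤ n ∧ i + k ≤ n ∧ a + k ≤ n ∧ HasBlk π k i a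

lemma fact_six (s t : ℕ) : (6+s).factorial * (6+t).factorial ≤ 720 * (6+s+t).factorial := by
  induction s with
  | zero => simp [Nat.factorial]
  | succ s ih =>
    have e1 : (6+(s+1)).factorial = (6+s+1) * (6+s).factorial := Nat.factorial_succ (6+s)
    have e2 : (6+(s+1)+t).factorial = (6+s+t+1) * (6+s+t).factorial := by
      rw [← Nat.factorial_succ]; congr 1; omega
    rw [e1, e2, mul_assoc]
    calc (6+s+1) * ((6+s).factorial * (6+t).factorial) ≤ (6+s+1) * (720 * (6+s+t).factorial) :=
          Nat.mul_le_mul_left _ ih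
      _ ≤ (6+s+t+1) * (720 * (6+s+t).factorial) := Nat.mul_le_mul_right _ (by omega)
      _ = _ := by ring

lemma mid_term (m j : ℕ) (hj : j ≤ m) :
    (m+4-j) * ((m+4-j) * ((5+j).factorial * (m+3-j).factorial)) ≤
      720 * (m+4).factorial + ((if j = 0 then 120 * (m+5).factorial else 0) +
        (if j = m then 120 * (m+5).factorial else 0)) := by
  obtain ⟨t, rfl⟩ := Nat.exists_eq_add_of_le hj
  rw [show j+t+4-j = t+4 by omega, show j+t+3-j = t+3 by omega]
  have h1 : (t+4) * ((t+4) * ((5+j).factorial * (t+3).factorial)) ≤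
      (5+j).factorial * (t+5).factorial := by
    rw [Nat.factorial_succ (t+4), Nat.factorial_succ (t+3)]
    calc (t+4) * ((t+4) * ((5+j).factorial * (t+3).factorial))
        ≤ (t+5) * ((t+4) * ((5+j).factorial * (t+3).factorial)) :=
          Nat.mul_le_mul_right _ (by omega)
      _ = _ := by ring
  refine h1.trans ?_
  rcases j with _ | j
  · have : (5+0).factorial = 120 := rfl
    rw [this, if_pos rfl, zero_add]
    omega
  · rcases t with _ | t
    · have : (0+5).factorial = 120 := rfl
      rw [this, add_zero, if_pos rfl, add_comm 5 (j+1)]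
      omega
    · have := fact_six j t
      rw [show 5+(j+1) = 6+j by omega, show t+1+5 = 6+t by omega, show j+1+(t+1)+4 = 6+j+t by omega]
      omega

lemma mid_le (m : ℕ) : cnt (fun π : Equiv.Perm (Fin (m+8)) => Mid π) ≤ 960 * (m+5).factorial := by
  have h1 : cnt (fun π : Equiv.Perm (Fin (m+8)) => Mid π) ≤
      cnt (fun π : Equiv.Perm (Fin (m+8)) => ∃ j ∈ range (m+1), ∃ i ∈ range (m+4-j),
        ∃ a ∈ range (m+4-j), HasBlk π (5+j) i a) := by
    apply cnt_mono
    rintro π ⟨k, i, a, h1, h2, h3, h4, h5⟩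
    refine ⟨k-5, mem_range.2 (by omega), i, mem_range.2 (by omega), a, mem_range.2 (by omega), ?_⟩
    rwa [show 5+(k-5) = k by omega]
  refine h1.trans ((cnt_exists_le _ _).trans ?_)
  calc ∑ j ∈ range (m+1), cnt (fun π : Equiv.Perm (Fin (m+8)) => ∃ i ∈ range (m+4-j),
        ∃ a ∈ range (m+4-j), HasBlk π (5+j) i a)
      ≤ ∑ j ∈ range (m+1), (720 * (m+4).factorial + ((if j = 0 then 120 * (m+5).factorial else 0) +
        (if j = m then 120 * (m+5).factorial else 0))) := by
        apply Finset.sum_le_sum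
        intro j hj
        rw [mem_range] at hj
        refine le_trans ?_ (mid_term m j (by omega))
        refine (cnt_exists_le _ _).trans ?_
        refine (Finset.sum_le_card_nsmul _ _ ((m+4-j) * ((5+j).factorial * (m+3-j).factorial)) ?_).trans ?_
        · intro i hi
          refine (cnt_exists_le _ _).trans ?_
          refine (Finset.sum_le_card_nsmul _ _ ((5+j).factorial * (m+3-j).factorial) ?_).trans ?_
          · intro a ha
            rw [mem_range] at hi ha
            have := cnt_blk (m+8) (5+j) i a (by omega)
            rwa [show m+8-(5+j) = m+3-j by omega] at this
          · rw [card_range, smul_eq_mul]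
        · rw [card_range, smul_eq_mul]
    _ ≤ _ := by
        rw [Finset.sum_add_distrib, Finset.sum_add_distrib, Finset.sum_ite_eq', Finset.sum_ite_eq',
          if_pos (by simp), if_pos (by simp), Finset.sum_const, card_range, smul_eq_mul]
        have := Nat.factorial_succ (m+4)
        have h2 : (m+1) * (720 * (m+4).factorial) ≤ 720 * (m+5).factorial := by
          rw [this]
          calc (m+1) * (720 * (m+4).factorial) ≤ (m+4+1) * (720 * (m+4).factorial) :=
                Nat.mul_le_mul_right _ (by omega)
            _ = _ := by ring
        omega

/-! ### Two disjoint 4-blocks; a 4-block and a corner -/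

def Dbl {n : ℕ} (π : Equiv.Perm (Fin n)) (i i' : ℕ) : Prop :=
  ∃ a a' : ℕ, a + 4 ≤ n ∧ a' + 4 ≤ n ∧ HasBlk π 4 i a ∧ HasBlk π 4 i' a'

lemma dbl_le (m i i' : ℕ) (hi : i + 4 ≤ i') (hi' : i' + 4 ≤ m + 8) :
    cnt (fun π : Equiv.Perm (Fin (m+8)) => Dbl π i i') ≤ (m+5) * ((m+5) * (576 * m.factorial)) := by
  have h1 : cnt (fun π : Equiv.Perm (Fin (m+8)) => Dbl π i i') ≤
      cnt (fun π : Equiv.Perm (Fin (m+8)) => ∃ a ∈ range (m+5), ∃ a' ∈ range (m+5),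
        HasBlk π 4 i a ∧ HasBlk π 4 i' a') := by
    apply cnt_mono
    rintro π ⟨a, a', h1, h2, h3⟩
    exact ⟨a, mem_range.2 (by omega), a', mem_range.2 (by omega), h3⟩
  refine h1.trans ((cnt_exists_le _ _).trans ?_)
  refine (Finset.sum_le_card_nsmul _ _ ((m+5) * (576 * m.factorial)) ?_).trans ?_
  · intro a _
    refine (cnt_exists_le _ _).trans ?_
    refine (Finset.sum_le_card_nsmul _ _ (576 * m.factorial) ?_).trans ?_
    · intro a' _
      exact cnt_blk2 (m+8) 4 i a i' a' hi hi'
    · rw [card_range, smul_eq_mul]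
  · rw [card_range, smul_eq_mul]

lemma dbl_sum_le (m : ℕ) : (m+5) * ((m+5) * ((m+5) * ((m+5) * (576 * m.factorial)))) ≤
    (576 * 625) * (m+5).factorial := by
  have e : (m+5).factorial = (m+5) * ((m+4) * ((m+3) * ((m+2) * ((m+1) * m.factorial)))) := by
    simp only [Nat.factorial_succ]
  rw [e]
  have h : (m+5) * (m+5) * (m+5) * (m+5) ≤ 625 * ((m+5) * (m+4) * (m+3) * (m+2) * (m+1)) := by
    have : (m+5)^3 ≤ 625 * ((m+4)*(m+3)*(m+2)*(m+1)) := by nlinarith [sq_nonneg m]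
    nlinarith
  calc _ = (m+5) * (m+5) * (m+5) * (m+5) * (576 * m.factorial) := by ring
    _ ≤ 625 * ((m+5) * (m+4) * (m+3) * (m+2) * (m+1)) * (576 * m.factorial) :=
      Nat.mul_le_mul_right _ h
    _ = _ := by ring

def CorBlk {m : ℕ} (π : Equiv.Perm (Fin (m+8))) : Prop :=
  ∃ x ∈ ({0, Fin.last (m+7)} : Finset (Fin (m+8))), ∃ y ∈ ({0, Fin.last (m+7)} : Finset (Fin (m+8))),
    ∃ i ∈ range (m+5), ∃ a ∈ range (m+5), (¬ (i ≤ x.val ∧ x.val < i + 4)) ∧ HasBlk π 4 i a ∧ π x = y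

lemma corBlk_le1 (m : ℕ) (x y : Fin (m+8)) :
    cnt (fun π : Equiv.Perm (Fin (m+8)) => ∃ i ∈ range (m+5), ∃ a ∈ range (m+5),
      (¬ (i ≤ x.val ∧ x.val < i + 4)) ∧ HasBlk π 4 i a ∧ π x = y) ≤ 48 * (m+5).factorial := by
  refine (cnt_exists_le _ _).trans ?_
  refine (Finset.sum_le_card_nsmul _ _ ((m+5) * (24 * (m+3).factorial)) ?_).trans ?_
  · intro i hi
    rw [mem_range] at hi
    refine (cnt_exists_le _ _).trans ?_
    refine (Finset.sum_le_card_nsmul _ _ (24 * (m+3).factorial) ?_).trans ?_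
    · intro a _
      by_cases hx : i ≤ x.val ∧ x.val < i + 4
      · rw [cnt_false]
        · exact Nat.zero_le _
        · intro π h; exact h.1 hx
      · refine le_trans (cnt_mono ?_) (cnt_blk_pt (m+8) 4 i a (by omega) x y hx)
        intro π h; exact h.2
    · rw [card_range, smul_eq_mul]
  · rw [card_range, smul_eq_mul, Nat.factorial_succ (m+4), Nat.factorial_succ (m+3)]
    calc (m+5) * ((m+5) * (24 * (m+3).factorial)) ≤ (2*(m+4)) * ((m+5) * (24 * (m+3).factorial)) :=
          Nat.mul_le_mul_right _ (by omega)
      _ = _ := by ring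

lemma corBlk_le (m : ℕ) : cnt (fun π : Equiv.Perm (Fin (m+8)) => CorBlk π) ≤
    192 * (m+5).factorial := by
  have h2 : (({0, Fin.last (m+7)} : Finset (Fin (m+8)))).card ≤ 2 := Finset.card_le_two
  unfold CorBlk
  refine (cnt_exists_le _ _).trans ?_
  refine (Finset.sum_le_card_nsmul _ _ (2 * (48 * (m+5).factorial)) ?_).trans ?_
  · intro x _
    refine (cnt_exists_le _ _).trans ?_
    refine (Finset.sum_le_card_nsmul _ _ (48 * (m+5).factorial) ?_).trans ?_
    · intro y _
      exact corBlk_le1 m x y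
    · rw [smul_eq_mul]; exact Nat.mul_le_mul_right _ h2
  · rw [smul_eq_mul]
    exact (Nat.mul_le_mul_right _ h2).trans (by omega)

end SC
end

section
open Finset
namespace SC

/-- value at a natural-number position -/
def ev {n : ℕ} (π : Equiv.Perm (Fin n)) (x : ℕ) : ℕ := if h : x < n then (π ⟨x, h⟩).val else 0

lemma ev_val {n : ℕ} (π : Equiv.Perm (Fin n)) (x : Fin n) : ev π x.val = (π x).val := by
  simp [ev]

lemma ev_lt {n : ℕ} (π : Equiv.Perm (Fin n)) {x : ℕ} (h : x < n) : ev π x < n := by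
  rw [ev_val π ⟨x, h⟩]; exact (π _).isLt

lemma ev_inj {n : ℕ} (π : Equiv.Perm (Fin n)) {x y : ℕ} (hx : x < n) (hy : y < n)
    (h : ev π x = ev π y) : x = y := by
  rw [ev_val π ⟨x, hx⟩, ev_val π ⟨y, hy⟩] at h
  have := π.injective (Fin.ext h)
  exact congrArg Fin.val this

lemma ev_ext {n : ℕ} {π σ : Equiv.Perm (Fin n)} (h : ∀ x, x < n → ev π x = ev σ x) : π = σ := by
  ext x
  rw [← ev_val, ← ev_val]
  exact h x.val x.isLt

lemma noAdj_ev {n : ℕ} (π : Equiv.Perm (Fin n)) : NoAdj π ↔ ∀ x, x + 1 < n →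
    ¬ (ev π x = ev π (x+1) + 1 ∨ ev π (x+1) = ev π x + 1) := by
  constructor
  · intro h x hx
    have := h ⟨x, by omega⟩ ⟨x+1, hx⟩ rfl
    rwa [← ev_val, ← ev_val] at this
  · intro h x y hxy
    have := h x.val (by have := y.isLt; omega)
    rw [← hxy, ev_val, ev_val] at this
    exact this

lemma hasBlk_ev {n : ℕ} (π : Equiv.Perm (Fin n)) (k i a : ℕ) : HasBlk π k i a ↔
    ∀ x, x < n → i ≤ x → x < i + k → a ≤ ev π x ∧ ev π x < a + k := by
  constructor
  · intro h x hx h1 h2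
    have := h ⟨x, hx⟩ h1 h2
    rwa [← ev_val] at this
  · intro h x h1 h2
    rw [← ev_val]
    exact h x.val x.isLt h1 h2

lemma mkP {n : ℕ} (f : ℕ → ℕ) (h1 : ∀ x, x < n → f x < n)
    (h2 : ∀ x y, x < n → y < n → x < y → f x ≠ f y) :
    ∃ π : Equiv.Perm (Fin n), ∀ x, x < n → ev π x = f x := by
  let g : Fin n → Fin n := fun x => ⟨f x.val, h1 _ x.isLt⟩
  have hg : Function.Injective g := by
    intro x y h
    have h := congrArg Fin.val h
    simp only [g] at h
    rcases lt_trichotomy x.val y.val with h3 | h3 | h3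
    · exact absurd h (h2 _ _ x.isLt y.isLt h3)
    · exact Fin.ext h3
    · exact absurd h.symm (h2 _ _ y.isLt x.isLt h3)
  refine ⟨Equiv.ofBijective g (Finite.injective_iff_bijective.1 hg), ?_⟩
  intro x hx
  rw [ev_val _ ⟨x, hx⟩]
  rfl

def sg (b : Bool) (j : ℕ) : ℕ :=
  if b then (if j = 0 then 1 else if j = 1 then 3 else if j = 2 then 0 else 2)
  else (if j = 0 then 2 else if j = 1 then 0 else if j = 2 then 3 else 1)

lemma sg_lt (b : Bool) (j : ℕ) : sg b j < 4 := by
  unfold sg; split_ifs <;> omega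

lemma sg_inj (b : Bool) {j k : ℕ} (hj : j < 4) (hk : k < 4) (h : sg b j = sg b k) : j = k := by
  unfold sg at h; split_ifs at h <;> omega

lemma sg_surj (b : Bool) {r : ℕ} (h : r < 4) : ∃ j < 4, sg b j = r := by
  have : ∀ b : Bool, ∀ r < 4, ∃ j < 4, sg b j = r := by decide
  exact this b r h

lemma sg_adj (b : Bool) {j : ℕ} (h : j + 1 < 4) :
    ¬ (sg b j = sg b (j+1) + 1 ∨ sg b (j+1) = sg b j + 1) := by
  have : ∀ b : Bool, ∀ j < 3, ¬ (sg b j = sg b (j+1) + 1 ∨ sg b (j+1) = sg b j + 1) := by decide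
  exact this b j (by omega)

lemma sg_zero (b : Bool) : sg b 0 = 1 ∨ sg b 0 = 2 := by cases b <;> decide
lemma sg_three (b : Bool) : sg b 3 = 1 ∨ sg b 3 = 2 := by cases b <;> decide

/-- pattern 2413 or 3142 on a 4-block at position `i` with least value `a` -/
def Pat {n : ℕ} (π : Equiv.Perm (Fin n)) (b : Bool) (i a : ℕ) : Prop :=
  ∀ j, j < 4 → ev π (i+j) = a + sg b j

def PatE {n : ℕ} (π : Equiv.Perm (Fin n)) (b : Bool) (i : ℕ) : Prop := ∃ a, Pat π b i a

def up (a w : ℕ) : ℕ := if w < a then w else w + 3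
def down (a y : ℕ) : ℕ := if y < a then y else if y < a + 4 then a else y - 3

def inflF (t : ℕ → ℕ) (b : Bool) (i x : ℕ) : ℕ :=
  if x < i then up (t i) (t x) else if x < i + 4 then t i + sg b (x - i) else up (t i) (t (x - 3))

lemma exists_infl {m : ℕ} (τ : Equiv.Perm (Fin (m+1))) (b : Bool) (i : ℕ) (hi : i < m + 1) :
    ∃ π : Equiv.Perm (Fin (m+4)), ∀ x, x < m + 4 → ev π x = inflF (ev τ) b i x := by
  apply mkP
  · intro x hx
    have h1 := ev_lt τ hi
    have h4 := sg_lt b (x - i)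
    unfold inflF up
    split_ifs
    · omega
    · have := ev_lt τ (x := x) (by omega); omega
    · omega
    · omega
    · have := ev_lt τ (x := x-3) (by omega); omega
  · intro x y hx hy hxy h
    have h1 := ev_lt τ hi
    have h4 := sg_lt b (x - i)
    have h5 := sg_lt b (y - i)
    unfold inflF at h
    have hne : ∀ u v, u < m + 1 → v < m + 1 → u < v → ev τ u ≠ ev τ v := by
      intro u v hu hv huv he
      have := ev_inj τ hu hv he
      omega
    by_cases hx1 : x < i
    · have nx := hne x i (by omega) hi hx1
      by_cases hy1 : y < i
      · have ny := hne x y (by omega) (by omega) hxy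
        simp only [hx1, hy1, if_true] at h
        unfold up at h; split_ifs at h <;> omega
      · by_cases hy2 : y < i + 4
        · simp only [hx1, hy1, hy2, if_true, if_false] at h
          unfold up at h; split_ifs at h <;> omega
        · have ny := hne i (y-3) hi (by omega) (by omega)
          have nxy := hne x (y-3) (by omega) (by omega) (by omega)
          simp only [hx1, hy1, hy2, if_true, if_false] at h
          unfold up at h; split_ifs at h <;> omega
    · have hy1 : ¬ y < i := by omega
      by_cases hx2 : x < i + 4
      · by_cases hy2 : y < i + 4
        · simp only [hx1, hx2, hy1, hy2, if_true, if_false] at h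
          have := sg_inj b (j := x - i) (k := y - i) (by omega) (by omega) (by omega)
          omega
        · have ny := hne i (y-3) hi (by omega) (by omega)
          simp only [hx1, hx2, hy1, hy2, if_true, if_false] at h
          unfold up at h; split_ifs at h <;> omega
      · have hy2 : ¬ y < i + 4 := by omega
        have nxy := hne (x-3) (y-3) (by omega) (by omega) (by omega)
        simp only [hx1, hx2, hy1, hy2, if_false] at h
        unfold up at h; split_ifs at h <;> omega

noncomputable def infl {m : ℕ} (b : Bool) (i : ℕ) (hi : i < m + 1) (τ : Equiv.Perm (Fin (m+1))) :
    Equiv.Perm (Fin (m+4)) := Classical.choose (exists_infl τ b i hi)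

lemma infl_ev {m : ℕ} (b : Bool) (i : ℕ) (hi : i < m + 1) (τ : Equiv.Perm (Fin (m+1))) (x : ℕ)
    (hx : x < m + 4) : ev (infl b i hi τ) x = inflF (ev τ) b i x :=
  Classical.choose_spec (exists_infl τ b i hi) x hx

lemma infl_pat {m : ℕ} (b : Bool) (i : ℕ) (hi : i < m + 1) (τ : Equiv.Perm (Fin (m+1))) :
    Pat (infl b i hi τ) b i (ev τ i) := by
  intro j hj
  rw [infl_ev _ _ _ _ _ (by omega)]
  unfold inflF
  rw [if_neg (by omega), if_pos (by omega), Nat.add_sub_cancel_left]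

lemma up_inj {a u v : ℕ} (h : up a u = up a v) (hu : u ≠ a) (hv : v ≠ a) : u = v := by
  unfold up at h; split_ifs at h <;> omega

lemma infl_inj {m : ℕ} (b : Bool) (i : ℕ) (hi : i < m + 1) (τ τ' : Equiv.Perm (Fin (m+1)))
    (h : infl b i hi τ = infl b i hi τ') : τ = τ' := by
  have hv : ∀ x, x < m + 4 → inflF (ev τ) b i x = inflF (ev τ') b i x := by
    intro x hx
    rw [← infl_ev b i hi τ x hx, ← infl_ev b i hi τ' x hx, h]
  have h0 : ev τ i = ev τ' i := by
    have := hv i (by omega)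
    unfold inflF at this
    simp only [lt_irrefl, if_false, show i < i + 4 by omega, if_true] at this
    omega
  apply ev_ext
  intro x hx
  rcases lt_trichotomy x i with h1 | h1 | h1
  · have := hv x (by omega)
    unfold inflF at this
    rw [if_pos h1, if_pos h1, ← h0] at this
    apply up_inj this
    · intro he; have := ev_inj τ hx hi he; omega
    · intro he; rw [h0] at he; have := ev_inj τ' hx hi he; omega
  · rw [h1]; exact h0
  · have := hv (x+3) (by omega)
    unfold inflF at this
    rw [if_neg (by omega), if_neg (by omega), if_neg (by omega), if_neg (by omega), ← h0,
      Nat.add_sub_cancel] at this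
    apply up_inj this
    · intro he; have := ev_inj τ hx hi he; omega
    · intro he; rw [h0] at he; have := ev_inj τ' hx hi he; omega

lemma infl_noAdj {m : ℕ} (b : Bool) (i : ℕ) (hi : i < m + 1) (τ : Equiv.Perm (Fin (m+1)))
    (h : NoAdj τ) : NoAdj (infl b i hi τ) := by
  rw [noAdj_ev] at h ⊢
  intro x hx
  rw [infl_ev _ _ _ _ _ (by omega), infl_ev _ _ _ _ _ (by omega)]
  have hne : ∀ u v, u < m + 1 → v < m + 1 → u < v → ev τ u ≠ ev τ v := by
    intro u v hu hv huv he
    have := ev_inj τ hu hv he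
    omega
  unfold inflF
  by_cases h1 : x + 1 < i
  · have := h x (by omega)
    have := hne x i (by omega) hi (by omega)
    have := hne (x+1) i (by omega) hi (by omega)
    rw [if_pos (by omega), if_pos (by omega)]
    unfold up
    split_ifs <;> omega
  · by_cases h2 : x + 1 = i
    · subst h2
      have := hne x (x+1) (by omega) hi (by omega)
      rw [if_pos (by omega), if_neg (by omega), if_pos (by omega), Nat.sub_self]
      have := sg_zero b
      unfold up
      split_ifs <;> omega
    · by_cases h3 : x + 1 < i + 4
      · rw [if_neg (by omega), if_pos (by omega), if_neg (by omega), if_pos (by omega)]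
        have := sg_adj b (j := x - i) (by omega)
        rw [show x + 1 - i = x - i + 1 by omega]
        omega
      · by_cases h4 : x + 1 = i + 4
        · rw [if_neg (by omega), if_pos (by omega), if_neg (by omega), if_neg (by omega),
            show x - i = 3 by omega, show x + 1 - 3 = i + 1 by omega]
          have := sg_three b
          have := hne i (i+1) hi (by omega) (by omega)
          unfold up
          split_ifs <;> omega
        · rw [if_neg (by omega), if_neg (by omega), if_neg (by omega), if_neg (by omega),
            show x + 1 - 3 = x - 3 + 1 by omega]
          have := h (x-3) (by omega)
          have := hne i (x-3) hi (by omega) (by omega)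
          have := hne i (x-3+1) hi (by omega) (by omega)
          unfold up
          split_ifs <;> omega

lemma pat_lower {m : ℕ} (b : Bool) (i : ℕ) (hi : i < m + 1) : cA (m+1) ≤
    cnt (fun π : Equiv.Perm (Fin (m+4)) => NoAdj π ∧ PatE π b i) := by
  rw [cA_eq]
  apply cnt_le_inj (infl b i hi)
  · intro τ h
    exact ⟨infl_noAdj b i hi τ h, _, infl_pat b i hi τ⟩
  · intro τ rho _ _ h
    exact infl_inj b i hi τ rho h

/-- outside the block positions, values avoid the block values -/
lemma Pat.out {n : ℕ} {π : Equiv.Perm (Fin n)} {b : Bool} {i a : ℕ} (h : Pat π b i a)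
    (hi : i + 4 ≤ n) {x : ℕ} (hx : x < n) (hxo : x < i ∨ i + 4 ≤ x) : ev π x < a ∨ a + 4 ≤ ev π x := by
  by_contra hc
  obtain ⟨j, hj, hj'⟩ := sg_surj b (r := ev π x - a) (by omega)
  have h1 := h j hj
  have := ev_inj π (x := x) (y := i + j) hx (by omega) (by omega)
  omega

lemma Pat.le {n : ℕ} {π : Equiv.Perm (Fin n)} {b : Bool} {i a : ℕ} (h : Pat π b i a)
    (hi : i + 4 ≤ n) : a + 4 ≤ n := by
  obtain ⟨j, hj, hj'⟩ := sg_surj b (r := 3) (by omega)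
  have h1 := h j hj
  have := ev_lt π (x := i + j) (by omega)
  omega

lemma exists_contr {m : ℕ} (π : Equiv.Perm (Fin (m+4))) (b : Bool) (i : ℕ) (hi : i < m + 1) (a : ℕ)
    (h : Pat π b i a) : ∃ τ : Equiv.Perm (Fin (m+1)), (∀ x, x < m + 4 → ev π x = inflF (ev τ) b i x) ∧
      (NoAdj π → ∀ w, w + 1 < m + 1 → w ≠ i → w + 1 ≠ i →
        ¬ (ev τ w = ev τ (w+1) + 1 ∨ ev τ (w+1) = ev τ w + 1)) := by
  have ha := h.le (by omega)
  have h0 : a ≤ ev π i ∧ ev π i < a + 4 := by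
    have := h 0 (by omega)
    have := sg_lt b 0
    rw [add_zero] at *
    omega
  have hne : ∀ u v, u < m + 4 → v < m + 4 → u < v → ev π u ≠ ev π v := by
    intro u v hu hv huv he
    have := ev_inj π hu hv he
    omega
  obtain ⟨τ, hτ⟩ := mkP (n := m+1) (fun w => down a (ev π (if w ≤ i then w else w + 3))) (by
      intro w hw
      have := ev_lt π (x := if w ≤ i then w else w + 3) (by split_ifs <;> omega)
      simp only [down]
      generalize ev π (if w ≤ i then w else w + 3) = y at *
      split_ifs <;> omega) (by
      intro x y hx hy hxy he
      by_cases h1 : x ≤ i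
      · by_cases h2 : y ≤ i
        · rw [if_pos h1, if_pos h2] at he
          have o1 := h.out (by omega) (x := x) (by omega) (by omega)
          have := hne x y (by omega) (by omega) hxy
          rcases Nat.lt_or_ge y i with h3 | h3
          · have o2 := h.out (by omega) (x := y) (by omega) (by omega)
            unfold down at he; split_ifs at he <;> omega
          · have : y = i := by omega
            subst this
            unfold down at he; split_ifs at he <;> omega
        · rw [if_pos h1, if_neg h2] at he
          have o2 := h.out (by omega) (x := y+3) (by omega) (by omega)
          have := hne x (y+3) (by omega) (by omega) (by omega)
          rcases Nat.lt_or_ge x i with h3 | h3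
          · have o1 := h.out (by omega) (x := x) (by omega) (by omega)
            unfold down at he; split_ifs at he <;> omega
          · have : x = i := by omega
            subst this
            unfold down at he; split_ifs at he <;> omega
      · rw [if_neg h1, if_neg (by omega)] at he
        have o1 := h.out (by omega) (x := x+3) (by omega) (by omega)
        have o2 := h.out (by omega) (x := y+3) (by omega) (by omega)
        have := hne (x+3) (y+3) (by omega) (by omega) (by omega)
        unfold down at he; split_ifs at he <;> omega)
  have hti : ev τ i = a := by
    rw [hτ i hi, if_pos le_rfl]
    unfold down
    rw [if_neg (by omega), if_pos (by omega)]
  refine ⟨τ, ?_, ?_⟩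
  · intro x hx
    unfold inflF
    rw [hti]
    split_ifs with h1 h2
    · rw [hτ x (by omega), if_pos (by omega)]
      have o1 := h.out (by omega) (x := x) (by omega) (by omega)
      unfold up down
      split_ifs <;> omega
    · have := h (x - i) (by omega)
      rwa [show i + (x - i) = x by omega] at this
    · rw [hτ (x-3) (by omega), if_neg (by omega), show x - 3 + 3 = x by omega]
      have o1 := h.out (by omega) (x := x) (by omega) (by omega)
      unfold up down
      split_ifs <;> omega
  · intro hna w hw hwi hwi'
    rw [noAdj_ev] at hna
    rw [hτ w (by omega), hτ (w+1) hw]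
    by_cases h1 : w < i
    · rw [if_pos (by omega), if_pos (by omega)]
      have := hna w (by omega)
      have o1 := h.out (by omega) (x := w) (by omega) (by omega)
      have o2 := h.out (by omega) (x := w+1) (by omega) (by omega)
      unfold down
      split_ifs <;> omega
    · rw [if_neg (by omega), if_neg (by omega), show w + 1 + 3 = w + 3 + 1 by omega]
      have := hna (w+3) (by omega)
      have o1 := h.out (by omega) (x := w+3) (by omega) (by omega)
      have o2 := h.out (by omega) (x := w+3+1) (by omega) (by omega)
      unfold down
      split_ifs <;> omega

def AdjAt {n : ℕ} (τ : Equiv.Perm (Fin n)) (w : ℕ) : Prop :=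
  w + 1 < n ∧ (ev τ w = ev τ (w+1) + 1 ∨ ev τ (w+1) = ev τ w + 1)

lemma adjAt_le (m w : ℕ) : cnt (fun τ : Equiv.Perm (Fin (m+5)) => AdjAt τ w) ≤ 2 * (m+4).factorial := by
  by_cases hw : w + 1 < m + 5
  swap
  · rw [cnt_false]
    · exact Nat.zero_le _
    · intro τ h; exact hw h.1
  have h1 : cnt (fun τ : Equiv.Perm (Fin (m+5)) => AdjAt τ w) ≤
      cnt (fun τ : Equiv.Perm (Fin (m+5)) => ∃ a ∈ range (m+4), HasBlk τ 2 w a) := by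
    apply cnt_mono
    rintro τ ⟨_, h⟩
    have k1 := ev_lt τ hw
    have k2 := ev_lt τ (x := w) (by omega)
    refine ⟨min (ev τ w) (ev τ (w+1)), mem_range.2 (by omega), ?_⟩
    rw [hasBlk_ev]
    intro x hx hx1 hx2
    rcases (show x = w ∨ x = w + 1 by omega) with rfl | rfl <;> omega
  refine h1.trans ((cnt_exists_le _ _).trans ?_)
  refine (Finset.sum_le_card_nsmul _ _ (2 * (m+3).factorial) ?_).trans ?_
  · intro a _
    exact cnt_blk (m+5) 2 w a (by omega)
  · rw [card_range, smul_eq_mul, Nat.factorial_succ (m+3)]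
    exact le_of_eq (by ring)

lemma pat_upper (m : ℕ) (b : Bool) (i : ℕ) (hi : i < m + 5) :
    cnt (fun π : Equiv.Perm (Fin (m+8)) => NoAdj π ∧ PatE π b i) ≤ cA (m+5) + 4 * (m+4).factorial := by
  have key : ∀ π : Equiv.Perm (Fin (m+4+4)), ∃ τ : Equiv.Perm (Fin (m+4+1)), PatE π b i →
      ((∀ x, x < m + 4 + 4 → ev π x = inflF (ev τ) b i x) ∧
      (NoAdj π → ∀ w, w + 1 < m + 4 + 1 → w ≠ i → w + 1 ≠ i →
        ¬ (ev τ w = ev τ (w+1) + 1 ∨ ev τ (w+1) = ev τ w + 1))) := by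
    intro π
    by_cases h : PatE π b i
    · obtain ⟨a, ha⟩ := h
      obtain ⟨τ, hτ⟩ := exists_contr π b i hi a ha
      exact ⟨τ, fun _ => hτ⟩
    · exact ⟨1, fun h' => absurd h' h⟩
  choose f hf using key
  have h1 : cnt (fun π : Equiv.Perm (Fin (m+8)) => NoAdj π ∧ PatE π b i) ≤
      cnt (fun τ : Equiv.Perm (Fin (m+5)) => NoAdj τ ∨ (AdjAt τ i ∨ AdjAt τ (i-1))) := by
    apply cnt_le_inj f
    · rintro π ⟨h1, h2⟩
      have := (hf π h2).2 h1
      by_cases h3 : NoAdj (f π)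
      · exact Or.inl h3
      · right
        rw [noAdj_ev] at h3
        push Not at h3
        obtain ⟨w, hw, hw'⟩ := h3
        by_cases e1 : w = i
        · left; subst e1; exact ⟨hw, hw'⟩
        · by_cases e2 : w + 1 = i
          · right; subst e2; exact ⟨hw, hw'⟩
          · exact absurd hw' (this w hw e1 e2)
    · rintro π π' ⟨_, h⟩ ⟨_, h'⟩ he
      apply ev_ext
      intro x hx
      rw [(hf π h).1 x hx, (hf π' h').1 x hx, he]
  have h2 := cnt_or_le (fun τ : Equiv.Perm (Fin (m+5)) => NoAdj τ) (fun τ => AdjAt τ i ∨ AdjAt τ (i-1))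
  have h3 := cnt_or_le (fun τ : Equiv.Perm (Fin (m+5)) => AdjAt τ i) (fun τ => AdjAt τ (i-1))
  have h4 := adjAt_le m i
  have h5 := adjAt_le m (i-1)
  rw [← cA_eq] at h2
  omega

lemma Pat.hasBlk {n : ℕ} {π : Equiv.Perm (Fin n)} {b : Bool} {i a : ℕ} (h : Pat π b i a) :
    HasBlk π 4 i a := by
  rw [hasBlk_ev]
  intro x hx h1 h2
  have := h (x - i) (by omega)
  rw [show i + (x - i) = x by omega] at this
  have := sg_lt b (x - i)
  omega

lemma Pat.overlap {n : ℕ} {π : Equiv.Perm (Fin n)} {b b' : Bool} {i d a a' : ℕ} (h : Pat π b i a)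
    (h' : Pat π b' (i+d) a') (hd : 1 ≤ d) (hd4 : d < 4) (hn : i + d + 4 ≤ n) : False := by
  have hne : ∀ u v, u < v → v < d + 4 → ev π (i+u) ≠ ev π (i+v) := by
    intro u v huv hv he
    have := ev_inj π (x := i+u) (y := i+v) (by omega) (by omega) he
    omega
  have a0 := h 0 (by omega)
  have a1 := h 1 (by omega)
  have a2 := h 2 (by omega)
  have a3 := h 3 (by omega)
  have b0 := h' 0 (by omega)
  have b1 := h' 1 (by omega)
  have b2 := h' 2 (by omega)
  have b3 := h' 3 (by omega)
  rw [add_assoc] at b0 b1 b2 b3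
  obtain rfl | rfl | rfl : d = 1 ∨ d = 2 ∨ d = 3 := by omega
  · have c0 := hne 0 2 (by omega) (by omega)
    have c4 := hne 0 4 (by omega) (by omega)
    have c5 := hne 1 4 (by omega) (by omega)
    have c6 := hne 2 4 (by omega) (by omega)
    have c7 := hne 3 4 (by omega) (by omega)
    norm_num at b0 b1 b2 b3
    simp only [add_zero] at c0 c4
    cases b <;> cases b' <;> simp [sg] at a0 a1 a2 a3 b0 b1 b2 b3 <;> omega
  · have c4 := hne 0 4 (by omega) (by omega)
    have c5 := hne 1 4 (by omega) (by omega)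
    have c6 := hne 0 5 (by omega) (by omega)
    have c7 := hne 1 5 (by omega) (by omega)
    norm_num at b0 b1 b2 b3
    simp only [add_zero] at c4 c6
    cases b <;> cases b' <;> simp [sg] at a0 a1 a2 a3 b0 b1 b2 b3 <;> omega
  · have c1 := hne 0 4 (by omega) (by omega)
    have c2 := hne 0 5 (by omega) (by omega)
    have c3 := hne 0 6 (by omega) (by omega)
    have c4 := hne 1 4 (by omega) (by omega)
    have c5 := hne 1 5 (by omega) (by omega)
    have c6 := hne 1 6 (by omega) (by omega)
    have c7 := hne 2 4 (by omega) (by omega)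
    have c8 := hne 2 5 (by omega) (by omega)
    have c9 := hne 2 6 (by omega) (by omega)
    norm_num at b0 b1 b2 b3
    simp only [add_zero] at c1 c2 c3
    cases b <;> cases b' <;> simp [sg] at a0 a1 a2 a3 b0 b1 b2 b3 <;> omega

/-- generic second-order Bonferroni bound -/
lemma bonf2 {α : Type*} [Fintype α] (Q : ℕ → α → Prop) (D : ℕ) (N : ℕ)
    (hD : ∀ i' < N, ∀ i < i', cnt (fun x => Q i' x ∧ Q i x) ≤ D) :
    ∑ i ∈ range N, cnt (Q i) ≤ cnt (fun x => ∃ i ∈ range N, Q i x) + N * (N * D) := by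
  have gen : ∀ M ≤ N, ∑ i ∈ range M, cnt (Q i) ≤ cnt (fun x => ∃ i ∈ range M, Q i x) + M * (N * D) := by
    intro M
    induction M with
    | zero => intro _; simp
    | succ M ih =>
      intro hM
      have ih := ih (by omega)
      rw [Finset.sum_range_succ]
      have h1 := cnt_or_and (Q M) (fun x => ∃ i ∈ range M, Q i x)
      have h2 : cnt (fun x => Q M x ∨ ∃ i ∈ range M, Q i x) = cnt (fun x => ∃ i ∈ range (M+1), Q i x) := by
        apply cnt_congr
        intro x
        rw [Finset.range_add_one]
        simp only [mem_insert, exists_eq_or_imp]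
      have h3 : cnt (fun x => Q M x ∧ ∃ i ∈ range M, Q i x) ≤ N * D := by
        have : cnt (fun x => Q M x ∧ ∃ i ∈ range M, Q i x) ≤
            cnt (fun x => ∃ i ∈ range M, (Q M x ∧ Q i x)) := by
          apply cnt_mono
          rintro x ⟨h, i, hi, h'⟩
          exact ⟨i, hi, h, h'⟩
        refine this.trans ((cnt_exists_le _ _).trans ?_)
        refine (Finset.sum_le_card_nsmul _ _ D ?_).trans ?_
        · intro i hi
          exact hD M (by omega) i (mem_range.1 hi)
        · rw [card_range, smul_eq_mul]
          exact Nat.mul_le_mul_right _ (by omega)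
      have h4 : (M+1) * (N*D) = M * (N*D) + N*D := by ring
      omega
  exact gen N le_rfl

def QQ {n : ℕ} (i : ℕ) (π : Equiv.Perm (Fin n)) : Prop :=
  (NoAdj π ∧ PatE π true i) ∨ (NoAdj π ∧ PatE π false i)

lemma cnt_QQ (m i : ℕ) : cnt (fun π : Equiv.Perm (Fin (m+8)) => QQ i π) =
    cnt (fun π : Equiv.Perm (Fin (m+8)) => NoAdj π ∧ PatE π true i) +
    cnt (fun π : Equiv.Perm (Fin (m+8)) => NoAdj π ∧ PatE π false i) := by
  rw [← cnt_or_and, cnt_false (p := fun π : Equiv.Perm (Fin (m+8)) => (NoAdj π ∧ PatE π true i) ∧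
    (NoAdj π ∧ PatE π false i)), add_zero]
  · rfl
  · rintro π ⟨⟨_, a, h⟩, _, a', h'⟩
    have h0 := h 0 (by omega)
    have h1 := h 1 (by omega)
    have h0' := h' 0 (by omega)
    have h1' := h' 1 (by omega)
    simp [sg] at h0 h1 h0' h1'
    omega

def E4 {m : ℕ} (π : Equiv.Perm (Fin (m+8))) : Prop := ∃ i ∈ range (m+5), ∃ b, PatE π b i

lemma e4_eq (m : ℕ) : cnt (fun π : Equiv.Perm (Fin (m+8)) => E4 π ∧ NoAdj π) =
    cnt (fun π : Equiv.Perm (Fin (m+8)) => ∃ i ∈ range (m+5), QQ i π) := by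
  apply cnt_congr
  intro π
  constructor
  · rintro ⟨⟨i, hi, b, h⟩, hn⟩
    refine ⟨i, hi, ?_⟩
    cases b
    · exact Or.inr ⟨hn, h⟩
    · exact Or.inl ⟨hn, h⟩
  · rintro ⟨i, hi, ⟨hn, h⟩ | ⟨hn, h⟩⟩
    · exact ⟨⟨i, hi, _, h⟩, hn⟩
    · exact ⟨⟨i, hi, _, h⟩, hn⟩

lemma QQ.patE {n i : ℕ} {π : Equiv.Perm (Fin n)} (h : QQ i π) : ∃ b a, Pat π b i a := by
  rcases h with ⟨_, h⟩ | ⟨_, h⟩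
  · exact ⟨true, h⟩
  · exact ⟨false, h⟩

lemma e4_upper (m : ℕ) : cnt (fun π : Equiv.Perm (Fin (m+8)) => E4 π ∧ NoAdj π) ≤
    2 * ((m+5) * cA (m+5)) + 8 * (m+5).factorial := by
  rw [e4_eq]
  refine (cnt_exists_le _ _).trans ?_
  refine (Finset.sum_le_card_nsmul _ _ (2 * (cA (m+5) + 4 * (m+4).factorial)) ?_).trans ?_
  · intro i hi
    rw [mem_range] at hi
    have := cnt_QQ m i
    have h1 := pat_upper m true i hi
    have h2 := pat_upper m false i hi
    change cnt (fun π : Equiv.Perm (Fin (m+8)) => QQ i π) ≤ _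
    omega
  · rw [card_range, smul_eq_mul, Nat.factorial_succ (m+4)]
    exact le_of_eq (by ring)

lemma e4_lower (m : ℕ) : 2 * ((m+5) * cA (m+5)) ≤
    cnt (fun π : Equiv.Perm (Fin (m+8)) => E4 π ∧ NoAdj π) + (576 * 625) * (m+5).factorial := by
  rw [e4_eq]
  have h := bonf2 (fun i (π : Equiv.Perm (Fin (m+8))) => QQ i π) ((m+5) * ((m+5) * (576 * m.factorial)))
    (m+5) (by
      intro i' hi' i hi
      by_cases hc : i + 4 ≤ i'
      · refine le_trans (cnt_mono ?_) (dbl_le m i i' hc (by omega))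
        rintro π ⟨h', h⟩
        obtain ⟨b, a, h⟩ := h.patE
        obtain ⟨b', a', h'⟩ := h'.patE
        exact ⟨a, a', h.le (by omega), h'.le (by omega), h.hasBlk, h'.hasBlk⟩
      · rw [cnt_false]
        · exact Nat.zero_le _
        · rintro π ⟨h', h⟩
          obtain ⟨b, a, h⟩ := h.patE
          obtain ⟨b', a', h'⟩ := h'.patE
          obtain ⟨d, rfl⟩ := Nat.exists_eq_add_of_lt hi
          exact Pat.overlap (d := d+1) h h' (by omega) (by omega) (by omega))
  have h1 := dbl_sum_le m
  have h2 : (m+5) * (2 * cA (m+5)) ≤ ∑ i ∈ range (m+5), cnt (fun π : Equiv.Perm (Fin (m+8)) => QQ i π) := by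
    have := Finset.card_nsmul_le_sum (range (m+5)) (fun i => cnt (fun π : Equiv.Perm (Fin (m+8)) => QQ i π))
      (2 * cA (m+5)) (by
        intro i hi
        rw [mem_range] at hi
        have := cnt_QQ m i
        have h1 := pat_lower (m := m+4) true i hi
        have h2 := pat_lower (m := m+4) false i hi
        change 2 * cA (m+5) ≤ cnt (fun π : Equiv.Perm (Fin (m+8)) => QQ i π)
        change cA (m+5) ≤ cnt (fun π : Equiv.Perm (Fin (m+8)) => NoAdj π ∧ PatE π true i) at h1
        change cA (m+5) ≤ cnt (fun π : Equiv.Perm (Fin (m+8)) => NoAdj π ∧ PatE π false i) at h2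
        omega)
    rwa [card_range, smul_eq_mul] at this
  have h3 : 2 * ((m+5) * cA (m+5)) = (m+5) * (2 * cA (m+5)) := by ring
  omega

lemma e4_cor (m : ℕ) : cnt (fun π : Equiv.Perm (Fin (m+7+1)) => (Cor π ∧ NoAdj π) ∧ (E4 π ∧ NoAdj π)) ≤
    192 * (m+5).factorial := by
  refine le_trans (cnt_mono ?_) (corBlk_le m)
  rintro π ⟨⟨hc, _⟩, ⟨i, hi, b, a, h⟩, _⟩
  rw [mem_range] at hi
  have hle := h.le (by omega)
  have key : ∀ x ∈ ({0, Fin.last (m+7)} : Finset (Fin (m+8))),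
      ∀ y ∈ ({0, Fin.last (m+7)} : Finset (Fin (m+8))), π x = y → CorBlk π := by
    intro x hx y hy hxy
    refine ⟨x, hx, y, hy, i, mem_range.2 hi, a, mem_range.2 (by omega), ?_, h.hasBlk, hxy⟩
    intro hb
    have e := ev_val π x
    rw [hxy] at e
    rw [mem_insert, mem_singleton] at hx hy
    have hy' : y.val = 0 ∨ y.val = m + 7 := by
      rcases hy with rfl | rfl <;> simp
    have hx' : x.val = 0 ∨ x.val = m + 7 := by
      rcases hx with rfl | rfl <;> simp
    have h0 := h 0 (by omega)
    have h3 := h 3 (by omega)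
    have := sg_zero b
    have := sg_three b
    rcases hx' with hx' | hx'
    · rw [show i + 0 = x.val by omega] at h0
      omega
    · rw [show i + 3 = x.val by omega] at h3
      omega
  rcases hc with (hc | hc) | (hc | hc)
  · exact key _ (by simp) _ (by simp) hc
  · exact key _ (by simp) _ (by simp) hc
  · exact key _ (by simp) _ (by simp) hc
  · exact key _ (by simp) _ (by simp) hc

end SC
end

section
open Finset
namespace SC

lemma blk_not_simple {n : ℕ} (π : Equiv.Perm (Fin n)) (k i a : ℕ) (hk : 2 ≤ k) (hkn : k < n)
    (hi : i + k ≤ n) (ha : a + k ≤ n) (h : HasBlk π k i a) : ¬ IsSimplePerm π := by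
  intro hs
  have := hs (Icc ⟨i, by omega⟩ ⟨i+k-1, by omega⟩) ⟨?_, ⟨_, _, rfl⟩, ⟨a, by omega⟩, ⟨a+k-1, by omega⟩, ?_⟩
  · rcases this with h1 | h1
    · rw [Fin.card_Icc] at h1
      simp only at h1
      omega
    · have h1 := congrArg card h1
      rw [Fin.card_Icc, card_univ, Fintype.card_fin] at h1
      simp only at h1
      omega
  · rw [nonempty_Icc, Fin.le_def]
    simp only; omega
  · ext y
    rw [mem_image, mem_Icc, Fin.le_def, Fin.le_def]
    simp only
    constructor
    · rintro ⟨x, hx, rfl⟩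
      rw [mem_Icc, Fin.le_def, Fin.le_def] at hx
      simp only at hx
      have := h x (by omega) (by omega)
      omega
    · intro hy
      refine ⟨π.symm y, ?_, π.apply_symm_apply y⟩
      have := h.iff hi (π.symm y)
      rw [π.apply_symm_apply] at this
      rw [mem_Icc, Fin.le_def, Fin.le_def]
      simp only
      omega

lemma not_simple_blk {n : ℕ} (π : Equiv.Perm (Fin n)) (h : ¬ IsSimplePerm π) :
    ∃ k i a : ℕ, 2 ≤ k ∧ k < n ∧ i + k ≤ n ∧ a + k ≤ n ∧ HasBlk π k i a := by
  unfold IsSimplePerm at h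
  push Not at h
  obtain ⟨B, ⟨hne, ⟨i, j, rfl⟩, a, b, him⟩, h1, h2⟩ := h
  have hij : i ≤ j := nonempty_Icc.1 hne
  rw [Fin.le_def] at hij
  have hc := congrArg card him
  rw [card_image_of_injective _ π.injective, Fin.card_Icc, Fin.card_Icc] at hc
  rw [Fin.card_Icc] at h1
  have hu : (Icc i j).card < Fintype.card (Fin n) := by
    apply Finset.card_lt_univ_of_notMem (x := Classical.choose (not_forall.1 (fun hall => h2 (Finset.eq_univ_iff_forall.2 hall))))
    exact Classical.choose_spec (not_forall.1 (fun hall => h2 (Finset.eq_univ_iff_forall.2 hall)))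
  rw [Fin.card_Icc, Fintype.card_fin] at hu
  have := j.isLt
  have := b.isLt
  refine ⟨j.val + 1 - i.val, i.val, a.val, by omega, by omega, by omega, by omega, ?_⟩
  intro x hx1 hx2
  have : π x ∈ (Icc i j).image π := by
    apply mem_image_of_mem
    rw [mem_Icc, Fin.le_def, Fin.le_def]
    omega
  rw [him, mem_Icc, Fin.le_def, Fin.le_def] at this
  omega

lemma cor_ev {m : ℕ} (π : Equiv.Perm (Fin (m+7+1))) : Cor π ↔
    (ev π 0 = 0 ∨ ev π (m+7) = m+7) ∨ (ev π 0 = m+7 ∨ ev π (m+7) = 0) := by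
  unfold Cor
  have h0 := ev_val π 0
  have h1 := ev_val π (Fin.last (m+7))
  simp only [Fin.val_zero, Fin.val_last] at h0 h1
  rw [h0, h1]
  simp only [Fin.ext_iff, Fin.val_zero, Fin.val_last]

lemma bad_of_blk {m : ℕ} (π : Equiv.Perm (Fin (m+7+1))) (k i a : ℕ) (hk : 2 ≤ k) (hkn : k < m+8)
    (hi : i + k ≤ m+8) (ha : a + k ≤ m+8) (h : HasBlk π k i a) (hn : NoAdj π) :
    Mid π ∨ (Cor π ∨ E4 π) := by
  have hne : ∀ u v, u < v → v < m + 8 → ev π u ≠ ev π v := by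
    intro u v huv hv he
    have := ev_inj π (x := u) (y := v) (by omega) (by omega) he
    omega
  have hif : ∀ x, x < m + 8 → ((a ≤ ev π x ∧ ev π x < a + k) ↔ (i ≤ x ∧ x < i + k)) := by
    intro x hx
    have := h.iff hi ⟨x, hx⟩
    rwa [← ev_val] at this
  have hna := (noAdj_ev π).1 hn
  by_cases h2 : k = 2
  · subst h2
    exfalso
    have e0 := hif i (by omega)
    have e1 := hif (i+1) (by omega)
    have := hne i (i+1) (by omega) (by omega)
    have := hna i (by omega)
    omega
  by_cases h3 : k = 3
  · subst h3
    exfalso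
    have e0 := (hif i (by omega)).2 (by omega)
    have e1 := (hif (i+1) (by omega)).2 (by omega)
    have e2 := (hif (i+2) (by omega)).2 (by omega)
    have := hne i (i+1) (by omega) (by omega)
    have := hne i (i+2) (by omega) (by omega)
    have := hne (i+1) (i+2) (by omega) (by omega)
    have := hna i (by omega)
    have a1 := hna (i+1) (by omega)
    rw [show i+1+1 = i+2 by omega] at a1
    omega
  by_cases h4 : k = 4
  · subst h4
    right; right
    refine ⟨i, mem_range.2 (by omega), ?_⟩
    have e0 := (hif i (by omega)).2 (by omega)
    have e1 := (hif (i+1) (by omega)).2 (by omega)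
    have e2 := (hif (i+2) (by omega)).2 (by omega)
    have e3 := (hif (i+3) (by omega)).2 (by omega)
    have n1 := hne i (i+1) (by omega) (by omega)
    have n2 := hne i (i+2) (by omega) (by omega)
    have n3 := hne i (i+3) (by omega) (by omega)
    have n4 := hne (i+1) (i+2) (by omega) (by omega)
    have n5 := hne (i+1) (i+3) (by omega) (by omega)
    have n6 := hne (i+2) (i+3) (by omega) (by omega)
    have a0 := hna i (by omega)
    have a1 := hna (i+1) (by omega)
    have a2 := hna (i+2) (by omega)
    rw [show i+1+1 = i+2 by omega] at a1
    rw [show i+2+1 = i+3 by omega] at a2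
    have key : (ev π i = a + 1 ∧ ev π (i+1) = a + 3 ∧ ev π (i+2) = a ∧ ev π (i+3) = a + 2) ∨
        (ev π i = a + 2 ∧ ev π (i+1) = a ∧ ev π (i+2) = a + 3 ∧ ev π (i+3) = a + 1) := by
      generalize ev π i = p0 at *
      generalize ev π (i+1) = p1 at *
      generalize ev π (i+2) = p2 at *
      generalize ev π (i+3) = p3 at *
      clear hif hna hne
      obtain ⟨q0, rfl⟩ := Nat.exists_eq_add_of_le e0.1
      obtain ⟨q1, rfl⟩ := Nat.exists_eq_add_of_le e1.1
      have hq0 : q0 = 0 ∨ q0 = 1 ∨ q0 = 2 ∨ q0 = 3 := by omega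
      have hq1 : q1 = 0 ∨ q1 = 1 ∨ q1 = 2 ∨ q1 = 3 := by omega
      rcases hq0 with rfl | rfl | rfl | rfl <;> rcases hq1 with rfl | rfl | rfl | rfl <;> omega
    rcases key with ⟨k0, k1, k2, k3⟩ | ⟨k0, k1, k2, k3⟩
    · refine ⟨true, a, ?_⟩
      intro j hj
      obtain rfl | rfl | rfl | rfl : j = 0 ∨ j = 1 ∨ j = 2 ∨ j = 3 := by omega
      · exact k0
      · exact k1
      · exact k2
      · exact k3
    · refine ⟨false, a, ?_⟩
      intro j hj
      obtain rfl | rfl | rfl | rfl : j = 0 ∨ j = 1 ∨ j = 2 ∨ j = 3 := by omega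
      · exact k0
      · exact k1
      · exact k2
      · exact k3
  by_cases h5 : k + 3 ≤ m + 8
  · left
    exact ⟨k, i, a, by omega, h5, hi, ha, h⟩
  right; left
  rw [cor_ev]
  have e0 := hif 0 (by omega)
  have e1 := hif 1 (by omega)
  have e2 := hif (m+6) (by omega)
  have e3 := hif (m+7) (by omega)
  have l0 := ev_lt π (x := 0) (by omega)
  have l1 := ev_lt π (x := 1) (by omega)
  have l2 := ev_lt π (x := m+6) (by omega)
  have l3 := ev_lt π (x := m+7) (by omega)
  have n1 := hne 0 1 (by omega) (by omega)
  have n2 := hne 0 (m+7) (by omega) (by omega)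
  have n3 := hne (m+6) (m+7) (by omega) (by omega)
  have a0 := hna 0 (by omega)
  have a1 : ¬ (ev π (m+6) = ev π (m+7) + 1 ∨ ev π (m+7) = ev π (m+6) + 1) := hna (m+6) (by omega)
  rw [zero_add] at a0
  clear hif hna hne h hn
  generalize ev π 0 = p0 at *
  generalize ev π 1 = p1 at *
  generalize ev π (m+6) = p2 at *
  generalize ev π (m+7) = p3 at *
  have hk' : k = m + 6 ∨ k = m + 7 := by omega
  have hi' : i = 0 ∨ i = 1 ∨ i = 2 := by omega
  have ha' : a = 0 ∨ a = 1 ∨ a = 2 := by omega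
  rcases hk' with rfl | rfl
  · rcases hi' with rfl | rfl | rfl <;> rcases ha' with rfl | rfl | rfl <;> omega
  · rcases hi' with rfl | rfl | rfl <;> rcases ha' with rfl | rfl | rfl <;> omega

lemma simple_iff {m : ℕ} (π : Equiv.Perm (Fin (m+7+1))) :
    IsSimplePerm π ↔ NoAdj π ∧ ¬ (Mid π ∨ (Cor π ∨ E4 π)) := by
  constructor
  · intro hs
    refine ⟨?_, ?_⟩
    · rw [noAdj_ev]
      intro x hx hadj
      have k1 := ev_lt π hx
      have k2 := ev_lt π (x := x) (by omega)
      refine blk_not_simple π 2 x (min (ev π x) (ev π (x+1))) (by omega) (by omega) (by omega) (by omega) ?_ hs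
      rw [hasBlk_ev]
      intro y hy hy1 hy2
      rcases (show y = x ∨ y = x + 1 by omega) with rfl | rfl <;> omega
    · rintro (⟨k, i, a, h1, h2, h3, h4, h5⟩ | hc | ⟨i, hi, b, a, h⟩)
      · exact blk_not_simple π k i a (by omega) (by omega) h3 h4 h5 hs
      · rw [cor_ev] at hc
        have hne : ∀ u v, u < v → v < m + 8 → ev π u ≠ ev π v := by
          intro u v huv hv he
          have := ev_inj π (x := u) (y := v) (by omega) (by omega) he
          omega
        rcases hc with (hc | hc) | (hc | hc)
        · refine blk_not_simple π (m+7) 1 1 (by omega) (by omega) (by omega) (by omega) ?_ hs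
          rw [hasBlk_ev]
          intro x hx hx1 hx2
          have := hne 0 x (by omega) (by omega)
          have := ev_lt π hx
          omega
        · refine blk_not_simple π (m+7) 0 0 (by omega) (by omega) (by omega) (by omega) ?_ hs
          rw [hasBlk_ev]
          intro x hx hx1 hx2
          have := hne x (m+7) (by omega) (by omega)
          have := ev_lt π hx
          omega
        · refine blk_not_simple π (m+7) 1 0 (by omega) (by omega) (by omega) (by omega) ?_ hs
          rw [hasBlk_ev]
          intro x hx hx1 hx2
          have := hne 0 x (by omega) (by omega)
          have := ev_lt π hx
          omega
        · refine blk_not_simple π (m+7) 0 1 (by omega) (by omega) (by omega) (by omega) ?_ hs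
          rw [hasBlk_ev]
          intro x hx hx1 hx2
          have := hne x (m+7) (by omega) (by omega)
          have := ev_lt π hx
          omega
      · rw [mem_range] at hi
        exact blk_not_simple π 4 i a (by omega) (by omega) (by omega) (h.le (by omega)) h.hasBlk hs
  · rintro ⟨hn, hb⟩
    by_contra hs
    obtain ⟨k, i, a, h1, h2, h3, h4, h5⟩ := not_simple_blk π hs
    exact hb (bad_of_blk π k i a h1 h2 h3 h4 h5 hn)

lemma simple_count (m : ℕ) : |(simpleCount (m+8) : ℝ) - (cA (m+8) - (4 * cA (m+7) - 6 * cA (m+6))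
      - 2 * (((m:ℝ)+5) * cA (m+5)))| ≤ 400000 * ((m+5).factorial : ℝ) := by
  have h1 : simpleCount (m+8) = cnt (fun π : Equiv.Perm (Fin (m+7+1)) =>
      NoAdj π ∧ ¬ (Mid π ∨ (Cor π ∨ E4 π))) := by
    unfold simpleCount
    rw [natCard_eq]
    exact cnt_congr fun π => simple_iff π
  have h2 := cnt_split (fun π : Equiv.Perm (Fin (m+7+1)) => NoAdj π) (fun π => Mid π ∨ (Cor π ∨ E4 π))
  rw [← cA_eq, ← h1] at h2
  have h3 := cnt_or_and (fun π : Equiv.Perm (Fin (m+7+1)) => Cor π ∧ NoAdj π) (fun π => E4 π ∧ NoAdj π)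
  have h4 := e4_cor m
  have h5 := e4_upper m
  have h6 := e4_lower m
  have h7 := mid_le m
  have h8 : cnt (fun π : Equiv.Perm (Fin (m+7+1)) => NoAdj π ∧ (Mid π ∨ (Cor π ∨ E4 π))) ≤
      cnt (fun π : Equiv.Perm (Fin (m+7+1)) => Mid π) +
      cnt (fun π : Equiv.Perm (Fin (m+7+1)) => (Cor π ∧ NoAdj π) ∨ (E4 π ∧ NoAdj π)) := by
    refine le_trans (cnt_mono ?_) (cnt_or_le _ _)
    rintro π ⟨h, h' | h' | h'⟩
    · exact Or.inl h'
    · exact Or.inr (Or.inl ⟨h', h⟩)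
    · exact Or.inr (Or.inr ⟨h', h⟩)
  have h9 : cnt (fun π : Equiv.Perm (Fin (m+7+1)) => (Cor π ∧ NoAdj π) ∨ (E4 π ∧ NoAdj π)) ≤
      cnt (fun π : Equiv.Perm (Fin (m+7+1)) => NoAdj π ∧ (Mid π ∨ (Cor π ∨ E4 π))) := by
    apply cnt_mono
    rintro π (⟨h, h'⟩ | ⟨h, h'⟩)
    · exact ⟨h', Or.inr (Or.inl h)⟩
    · exact ⟨h', Or.inr (Or.inr h)⟩
  have h10 := cCor_asym (m+5)
  change cnt (fun π : Equiv.Perm (Fin (m+7+1)) => Mid π) ≤ _ at h7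
  have hcor : cCor (m+5+2) = cnt (fun π : Equiv.Perm (Fin (m+7+1)) => Cor π ∧ NoAdj π) := rfl
  rw [hcor] at h10
  generalize cnt (fun π : Equiv.Perm (Fin (m+7+1)) => Cor π ∧ NoAdj π) = xC at *
  change _ = xC + cnt (fun π : Equiv.Perm (Fin (m+8)) => E4 π ∧ NoAdj π) at h3
  generalize cnt (fun π : Equiv.Perm (Fin (m+8)) => E4 π ∧ NoAdj π) = xE at *
  generalize cnt (fun π : Equiv.Perm (Fin (m+7+1)) => Mid π) = xM at *
  generalize cnt (fun π : Equiv.Perm (Fin (m+7+1)) => (Cor π ∧ NoAdj π) ∨ (E4 π ∧ NoAdj π)) = xU at *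
  generalize cnt (fun π : Equiv.Perm (Fin (m+7+1)) => (Cor π ∧ NoAdj π) ∧ (E4 π ∧ NoAdj π)) = xI at *
  generalize cnt (fun π : Equiv.Perm (Fin (m+7+1)) => NoAdj π ∧ (Mid π ∨ (Cor π ∨ E4 π))) = xX at *
  clear h1 hcor
  change xX + simpleCount (m+8) = cA (m+8) at h2
  change |(xC : ℝ) - (4 * cA (m+7) - 6 * cA (m+6))| ≤ _ at h10
  have g2 : (xX : ℝ) + simpleCount (m+8) = cA (m+8) := by exact_mod_cast h2
  have g3 : (xU : ℝ) + xI = xC + xE := by exact_mod_cast h3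
  have g4 : (xI : ℝ) ≤ 192 * ((m+5).factorial : ℝ) := by exact_mod_cast h4
  have g5 : (xE : ℝ) ≤ 2 * (((m:ℝ)+5) * cA (m+5)) + 8 * ((m+5).factorial : ℝ) := by exact_mod_cast h5
  have g6 : 2 * (((m:ℝ)+5) * cA (m+5)) ≤ xE + (576*625) * ((m+5).factorial : ℝ) := by exact_mod_cast h6
  have g7 : (xM : ℝ) ≤ 960 * ((m+5).factorial : ℝ) := by exact_mod_cast h7
  have g8 : (xX : ℝ) ≤ xM + xU := by exact_mod_cast h8
  have g9 : (xU : ℝ) ≤ xX := by exact_mod_cast h9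
  have p1 := Nat.cast_nonneg (α := ℝ) xI
  have p2 := Nat.cast_nonneg (α := ℝ) xM
  have p3 := Nat.cast_nonneg (α := ℝ) ((m+5).factorial)
  rw [abs_le] at h10 ⊢
  constructor <;> linarith [h10.1, h10.2]

theorem final_OO : OO 3 (fun m => (simpleCount (m+8) : ℝ) / ((m+8).factorial : ℝ) -
    Real.exp (-2) * (1 - 4 / ((m:ℝ)+8) + 2 / (((m:ℝ)+8) * ((m:ℝ)+7)))) := by
  have ia : OO 1 (fun m => 1 / ((m:ℝ)+8)) := (OO.inv 7).congr (fun m => by norm_num)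
  have ib : OO 1 (fun m => 1 / ((m:ℝ)+7)) := (OO.inv 6).congr (fun m => by norm_num)
  have ic : OO 1 (fun m => 1 / ((m:ℝ)+6)) := (OO.inv 5).congr (fun m => by norm_num)
  have id : OO 1 (fun m => 1 / ((m:ℝ)+5)) := (OO.inv 4).congr (fun m => by norm_num)
  have a8 := cA_asym.shift 7
  have a7 := cA_asym.shift 6
  have a6 := cA_asym.shift 5
  have a5 := cA_asym.shift 4
  have iabc := (ia.mul ib).mul ic
  have herr : OO 3 (fun m => ((simpleCount (m+8) : ℝ) - (cA (m+8) - (4 * cA (m+7) - 6 * cA (m+6))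
      - 2 * (((m:ℝ)+5) * cA (m+5)))) / ((m+8).factorial : ℝ)) := by
    obtain ⟨K, hK⟩ := iabc
    refine ⟨400000 * K, fun m => ?_⟩
    have hf : ((m+8).factorial : ℝ) = ((m:ℝ)+8) * (((m:ℝ)+7) * (((m:ℝ)+6) * ((m+5).factorial : ℝ))) := by
      rw [Nat.factorial_succ (m+7), Nat.factorial_succ (m+6), Nat.factorial_succ (m+5)]
      push_cast; ring
    have h1 := simple_count m
    have h2 := hK m
    have hp : (0:ℝ) < ((m+5).factorial : ℝ) := by exact_mod_cast Nat.factorial_pos _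
    have hm : (0:ℝ) ≤ m := Nat.cast_nonneg m
    rw [abs_div, abs_of_pos (a := ((m+8).factorial : ℝ)) (by exact_mod_cast Nat.factorial_pos _)]
    rw [abs_of_pos (by positivity)] at h2
    calc _ ≤ 400000 * ((m+5).factorial : ℝ) / ((m+8).factorial : ℝ) := by gcongr
      _ = 400000 * (1 / ((m:ℝ)+8) * (1 / ((m:ℝ)+7)) * (1 / ((m:ℝ)+6))) := by
          rw [hf]; field_simp
      _ ≤ 400000 * (K / ((m:ℝ)+1)^(1+1+1)) := by gcongr
      _ = _ := by ring
  have t7 := ((ia.mul a7).cmul 4).mono (show 3 ≤ 1 + 3 by omega)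
  have t6 := (((ia.mul ib).mul a6).cmul 6).mono (show 3 ≤ 1 + 1 + 3 by omega)
  have t5 := (((ia.mul ib).mul a5).cmul 2).mono (show 3 ≤ 1 + 1 + 3 by omega)
  have t5' := (((iabc).mul a5).cmul 2).mono (show 3 ≤ 1 + 1 + 1 + 3 by omega)
  have b1 := ((ia.mul ia).mul ib).cmul (2 * Real.exp (-2))
  have b2 := iabc.cmul (2 * Real.exp (-2))
  have b3 := ((ia.mul ib).mul ib).cmul (8 * Real.exp (-2))
  have b4 := ((iabc.mul ic).cmul (12 * Real.exp (-2))).mono (show 3 ≤ 1+1+1+1 by omega)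
  have b5 := (((ia.mul ib).mul (id.mul id)).cmul (4 * Real.exp (-2))).mono (show 3 ≤ 1+1+(1+1) by omega)
  have b6 := ((iabc.mul (id.mul id)).cmul (4 * Real.exp (-2))).mono (show 3 ≤ 1+1+1+(1+1) by omega)
  have tot := (((((herr.add a8).sub t7).add t6).sub t5).add t5').add
    (((((b1.add b2).add b3).sub b4).add b5).sub b6)
  refine tot.congr fun m => ?_
  have hm : (0:ℝ) ≤ m := Nat.cast_nonneg m
  have f8 : ((m+8).factorial : ℝ) = ((m:ℝ)+8) * ((m+7).factorial : ℝ) := by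
    rw [Nat.factorial_succ (m+7)]; push_cast; ring
  have f7 : ((m+7).factorial : ℝ) = ((m:ℝ)+7) * ((m+6).factorial : ℝ) := by
    rw [Nat.factorial_succ (m+6)]; push_cast; ring
  have f6 : ((m+6).factorial : ℝ) = ((m:ℝ)+6) * ((m+5).factorial : ℝ) := by
    rw [Nat.factorial_succ (m+5)]; push_cast; ring
  have hp : (0:ℝ) < ((m+5).factorial : ℝ) := by exact_mod_cast Nat.factorial_pos _
  simp only [show m+7+1 = m+8 by omega, show m+6+1 = m+7 by omega, show m+5+1 = m+6 by omega,
    show m+4+1 = m+5 by omega]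
  push_cast
  rw [f8, f7, f6]
  generalize ((m+5).factorial : ℝ) = F at *
  generalize (cA (m+8) : ℝ) = c8
  generalize (cA (m+7) : ℝ) = c7
  generalize (cA (m+6) : ℝ) = c6
  generalize (cA (m+5) : ℝ) = c5
  generalize (simpleCount (m+8) : ℝ) = s
  generalize Real.exp (-2) = e
  generalize (m:ℝ) = x at *
  have x1 : x + 8 ≠ 0 := by positivity
  have x2 : x + 7 ≠ 0 := by positivity
  have x3 : x + 6 ≠ 0 := by positivity
  have x4 : x + 5 ≠ 0 := by positivity
  have y1 : x + 7 + 1 = x + 8 := by ring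
  have y2 : x + 6 + 1 = x + 7 := by ring
  have y3 : x + 5 + 1 = x + 6 := by ring
  have y4 : x + 4 + 1 = x + 5 := by ring
  rw [y1, y2, y3, y4]
  have hF : F ≠ 0 := hp.ne'
  field_simp
  ring

end SC
end


theorem simpleCount_asymptotics :
    ∃ K : ℝ, 0 < K ∧ ∃ N : ℕ, ∀ n : ℕ, N ≤ n →
      |(simpleCount n : ℝ) -
          (Nat.factorial n : ℝ) / Real.exp 1 ^ 2 *
            (1 - 4 / (n : ℝ) + 2 / ((n : ℝ) * ((n : ℝ) - 1)))| ≤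
        K * (Nat.factorial n : ℝ) / (n : ℝ) ^ 3 := by
  obtain ⟨K, hK⟩ := SC.final_OO
  refine ⟨512 * |K| + 1, by positivity, 8, ?_⟩
  intro n hn
  obtain ⟨m, rfl⟩ := Nat.exists_eq_add_of_le' hn
  have h := hK m
  have hm : (0:ℝ) ≤ m := Nat.cast_nonneg m
  have hp : (0:ℝ) < ((m+8).factorial : ℝ) := by exact_mod_cast Nat.factorial_pos _
  have he : Real.exp (-2) = 1 / Real.exp 1 ^ 2 := by
    rw [Real.exp_neg, ← Real.exp_nat_mul, one_div]; norm_num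
  have heq : (simpleCount (m+8) : ℝ) - ((m+8).factorial : ℝ) / Real.exp 1 ^ 2 *
            (1 - 4 / ((m+8 : ℕ) : ℝ) + 2 / (((m+8 : ℕ) : ℝ) * (((m+8 : ℕ) : ℝ) - 1))) =
      ((m+8).factorial : ℝ) * ((simpleCount (m+8) : ℝ) / ((m+8).factorial : ℝ) -
    Real.exp (-2) * (1 - 4 / ((m:ℝ)+8) + 2 / (((m:ℝ)+8) * ((m:ℝ)+7)))) := by
    rw [he]
    push_cast
    rw [show (m:ℝ) + 8 - 1 = m + 7 by ring, mul_sub, mul_div_cancel₀ _ hp.ne']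
    ring
  rw [heq, abs_mul, abs_of_pos hp]
  have h3 : K / ((m:ℝ)+1)^3 ≤ (512 * |K| + 1) / ((m:ℝ)+8)^3 := by
    rw [div_le_div_iff₀ (by positivity) (by positivity)]
    have h8 : ((m:ℝ)+8)^3 ≤ (8 * ((m:ℝ)+1))^3 := by
      gcongr; linarith
    calc K * ((m:ℝ)+8)^3 ≤ |K| * ((m:ℝ)+8)^3 := by gcongr; exact le_abs_self K
      _ ≤ |K| * (8 * ((m:ℝ)+1))^3 := by gcongr
      _ = 512 * |K| * ((m:ℝ)+1)^3 := by ring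
      _ ≤ _ := by gcongr; linarith
  calc _ ≤ ((m+8).factorial : ℝ) * ((512 * |K| + 1) / ((m:ℝ)+8)^3) := by
        gcongr; exact h.trans h3
    _ = _ := by push_cast; ring
end

section
/- For all integers n and k with 2 ≤ k ≤ n, the number p_{n,k} of permutations of length n containing a minimal block of length k satisfies p_{n,k} ≤ s_k·(n−k+1)·(n−k+1)!. -/
/-- A minimal block: a non-singleton block containing no other non-singleton block. -/
def IsMinimalBlock {n : ℕ} (π : Equiv.Perm (Fin n)) (B : Finset (Fin n)) : Prop :=
  IsPermBlock π B ∧ 1 < B.card ∧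
    ∀ B' : Finset (Fin n), IsPermBlock π B' → 1 < B'.card → B' ⊆ B → B' = B

/-- `p_{n,k}`: the number of permutations of length `n` containing a minimal block of
length `k`. -/
noncomputable def minBlockCount (n k : ℕ) : ℕ :=
  Nat.card {π : Equiv.Perm (Fin n) // ∃ B, IsMinimalBlock π B ∧ B.card = k}

/-- Inclusion of the contracted positions. -/
def expandPos (k i x : ℕ) : ℕ := if x ≤ i then x else x + (k - 1)

/-- Contraction of the interval `[a, a+k-1]` to the point `a`. -/
def contractVal (k a v : ℕ) : ℕ := if v < a then v else if v < a + k then a else v - (k - 1)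

/-- `π` is encoded by the triple `(σ, i, τ)`. -/
def Encodes (n k : ℕ) (π : Equiv.Perm (Fin n)) (σ : Equiv.Perm (Fin k)) (i : Fin (n - k + 1))
    (τ : Equiv.Perm (Fin (n - k + 1))) : Prop :=
  ∃ a : ℕ, a + k ≤ n ∧
    (∀ y : Fin n, ((i : ℕ) ≤ y ∧ (y : ℕ) < i + k) ↔ (a ≤ (π y : ℕ) ∧ (π y : ℕ) < a + k)) ∧
    (∀ (x : Fin k) (y : Fin n), (y : ℕ) = i + x → (π y : ℕ) = a + σ x) ∧
    (∀ (x : Fin (n - k + 1)) (y : Fin n), (y : ℕ) = expandPos k i x →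
      (τ x : ℕ) = contractVal k a (π y))

theorem Encodes.unique {n k : ℕ} (hk : 2 ≤ k) (hkn : k ≤ n) {π π' : Equiv.Perm (Fin n)}
    {σ : Equiv.Perm (Fin k)} {i : Fin (n - k + 1)} {τ : Equiv.Perm (Fin (n - k + 1))}
    (h : Encodes n k π σ i τ) (h' : Encodes n k π' σ i τ) : π = π' := by
  obtain ⟨a, ha, hb, hs, ht⟩ := h
  obtain ⟨a', ha', hb', hs', ht'⟩ := h'
  have hi := i.isLt
  have key : ∀ (b : ℕ) (ρ : Equiv.Perm (Fin n)),
      (∀ y : Fin n, ((i : ℕ) ≤ y ∧ (y : ℕ) < i + k) ↔ (b ≤ (ρ y : ℕ) ∧ (ρ y : ℕ) < b + k)) →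
      (∀ (x : Fin (n - k + 1)) (y : Fin n), (y : ℕ) = expandPos k i x →
      (τ x : ℕ) = contractVal k b (ρ y)) → (τ i : ℕ) = b := by
    intro b ρ h1 h2
    have h3 := h2 i ⟨i, by omega⟩ (by simp [expandPos])
    have h4 := (h1 ⟨i, by omega⟩).1 ⟨le_refl _, by simp; omega⟩
    rw [h3, contractVal, if_neg (by omega), if_pos h4.2]
  have e1 := key a π hb ht
  have e2 := key a' π' hb' ht'
  obtain rfl : a = a' := by omega
  ext y
  by_cases hy : (i : ℕ) ≤ y ∧ (y : ℕ) < i + k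
  · rw [hs ⟨y - i, by omega⟩ y (by simp; omega), hs' ⟨y - i, by omega⟩ y (by simp; omega)]
  · have hx : ∃ x : Fin (n - k + 1), (y : ℕ) = expandPos k i x := by
      have := y.isLt
      by_cases hyi : (y : ℕ) < i
      · exact ⟨⟨y, by omega⟩, by simp only [expandPos]; split_ifs <;> omega⟩
      · exact ⟨⟨y - (k - 1), by omega⟩, by simp only [expandPos]; split_ifs <;> omega⟩
    obtain ⟨x, hx⟩ := hx
    have h1 := ht x y hx
    have h2 := ht' x y hx
    have h3 := (hb y).not.1 hy
    have h4 := (hb' y).not.1 hy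
    rw [h1] at h2
    simp only [contractVal] at h2
    split_ifs at h2 <;> omega

theorem exists_bounds {n k : ℕ} (hk : 2 ≤ k) (i j : Fin n) (h : (Finset.Icc i j).card = k) :
    (i : ℕ) + k ≤ n ∧ ∀ y : Fin n, y ∈ Finset.Icc i j ↔ (i : ℕ) ≤ y ∧ (y : ℕ) < i + k := by
  rw [Fin.card_Icc] at h
  refine ⟨by omega, fun y => ?_⟩
  rw [Finset.mem_Icc, Fin.le_def, Fin.le_def]
  omega

theorem exists_encodes {n k : ℕ} (hk : 2 ≤ k) (hkn : k ≤ n) (π : Equiv.Perm (Fin n))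
    (B : Finset (Fin n)) (hB : IsMinimalBlock π B) (hBk : B.card = k) :
    ∃ (σ : Equiv.Perm (Fin k)) (i : Fin (n - k + 1)) (τ : Equiv.Perm (Fin (n - k + 1))),
      IsSimplePerm σ ∧ Encodes n k π σ i τ := by
  obtain ⟨⟨hne, ⟨i, j, hij⟩, ⟨a, b, hab⟩⟩, hc, hmin⟩ := hB
  obtain ⟨hin, hi⟩ := exists_bounds hk i j (by rw [← hij, hBk])
  obtain ⟨han, ha⟩ := exists_bounds hk a b
    (by rw [← hab, Finset.card_image_of_injective _ π.injective, hBk])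
  have hb : ∀ y : Fin n, ((i : ℕ) ≤ y ∧ (y : ℕ) < i + k) ↔
      (a : ℕ) ≤ (π y : ℕ) ∧ (π y : ℕ) < a + k := by
    intro y
    rw [← hi, ← ha, ← hij, ← hab, Finset.mem_image]
    constructor
    · exact fun h => ⟨y, h, rfl⟩
    · rintro ⟨z, hz, hzy⟩
      rwa [← π.injective hzy]
  have hinj : ∀ y z : Fin n, (π y : ℕ) = π z → (y : ℕ) = z := fun y z h => by
    rw [π.injective (Fin.ext h)]
  -- the map `σ`
  have hbx : ∀ x : Fin k, (a : ℕ) ≤ (π ⟨i + x, by omega⟩ : ℕ) ∧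
      (π ⟨i + x, by omega⟩ : ℕ) < a + k := fun x => (hb _).1 ⟨by simp, by simp⟩
  let s : Fin k → Fin k := fun x => ⟨π ⟨i + x, by omega⟩ - a, by have := hbx x; omega⟩
  have hsinj : Function.Injective s := by
    intro x y hxy
    have h1 := hbx x
    have h2 := hbx y
    have h3 := congrArg Fin.val hxy
    simp only [s] at h3
    have h4 := hinj ⟨i + x, by omega⟩ ⟨i + y, by omega⟩ (by omega)
    simp only at h4
    exact Fin.ext (by omega)
  let σ : Equiv.Perm (Fin k) := Equiv.ofBijective s (Finite.injective_iff_bijective.1 hsinj)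
  have hσ : ∀ (x : Fin k) (y : Fin n), (y : ℕ) = i + x → (π y : ℕ) = a + σ x := by
    intro x y hy
    rw [show y = ⟨i + x, by have := x.isLt; omega⟩ from Fin.ext hy]
    have h1 := hbx x
    change _ = (a : ℕ) + (π ⟨i + x, by omega⟩ - a)
    omega
  -- the map `τ`
  have hex : ∀ x : Fin (n - k + 1), expandPos k i x < n := by
    intro x
    have := x.isLt
    simp only [expandPos]; split_ifs <;> omega
  have hcl : ∀ v, v < n → contractVal k a v < n - k + 1 := by
    intro v hv
    simp only [contractVal]; split_ifs <;> omega
  let t : Fin (n - k + 1) → Fin (n - k + 1) := fun x =>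
    ⟨contractVal k a (π ⟨expandPos k i x, hex x⟩), hcl _ (Fin.isLt _)⟩
  have htinj : Function.Injective t := by
    intro x y hxy
    have h3 := congrArg Fin.val hxy
    simp only [t] at h3
    have h1 := hb ⟨expandPos k i x, hex x⟩
    have h2 := hb ⟨expandPos k i y, hex y⟩
    have h4 := hinj ⟨expandPos k i x, hex x⟩ ⟨expandPos k i y, hex y⟩
    generalize (π ⟨expandPos k i x, hex x⟩ : ℕ) = u at *
    generalize (π ⟨expandPos k i y, hex y⟩ : ℕ) = v at *
    apply Fin.ext
    simp only [expandPos, contractVal] at h1 h2 h3 h4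
    split_ifs at h1 h2 h3 h4 <;> omega
  let τ : Equiv.Perm (Fin (n - k + 1)) :=
    Equiv.ofBijective t (Finite.injective_iff_bijective.1 htinj)
  refine ⟨σ, ⟨i, by omega⟩, τ, ?_, a, han, hb, hσ, ?_⟩
  · rintro C ⟨hCne, ⟨p, q, hpq⟩, ⟨r, u, hru⟩⟩
    by_cases hC1 : C.card = 1
    · exact Or.inl hC1
    right
    have hCc : 1 < C.card := by
      have := hCne.card_pos
      omega
    let f : Fin k → Fin n := fun x => ⟨i + x, by omega⟩
    have hf : Function.Injective f := by
      intro x y hxy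
      have := congrArg Fin.val hxy
      simp only [f] at this
      exact Fin.ext (by omega)
    have hcard : (C.image f).card = C.card := Finset.card_image_of_injective _ hf
    have hblock : IsPermBlock π (C.image f) := by
      refine ⟨hCne.image f, ⟨f p, f q, ?_⟩, ⟨⟨a + r, by omega⟩, ⟨a + u, by omega⟩, ?_⟩⟩
      · ext y
        rw [Finset.mem_image, Finset.mem_Icc]
        constructor
        · rintro ⟨x, hx, rfl⟩
          rw [hpq, Finset.mem_Icc, Fin.le_def, Fin.le_def] at hx
          simp only [f, Fin.le_def]
          omega
        · intro h
          simp only [f, Fin.le_def] at h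
          refine ⟨⟨y - i, by omega⟩, ?_, ?_⟩
          · rw [hpq, Finset.mem_Icc, Fin.le_def, Fin.le_def]
            simp only
            omega
          · apply Fin.ext
            simp only [f]
            omega
      · ext v
        rw [Finset.mem_image, Finset.mem_Icc]
        constructor
        · rintro ⟨y, hy, rfl⟩
          obtain ⟨x, hx, rfl⟩ := Finset.mem_image.1 hy
          have h1 := Finset.mem_image_of_mem σ hx
          rw [hru, Finset.mem_Icc, Fin.le_def, Fin.le_def] at h1
          have h2 := hσ x (f x) rfl
          simp only [Fin.le_def]
          omega
        · intro h
          simp only [Fin.le_def] at h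
          have h1 : (⟨v - a, by omega⟩ : Fin k) ∈ C.image σ := by
            rw [hru, Finset.mem_Icc, Fin.le_def, Fin.le_def]
            simp only
            omega
          obtain ⟨x, hx, hxv⟩ := Finset.mem_image.1 h1
          have h2 := hσ x (f x) rfl
          rw [hxv] at h2
          refine ⟨f x, Finset.mem_image_of_mem f hx, Fin.ext ?_⟩
          simp only at h2
          omega
    have hsub : C.image f ⊆ B := by
      intro y hy
      obtain ⟨x, hx, rfl⟩ := Finset.mem_image.1 hy
      rw [hij, hi]
      simp [f]
    have heq := hmin _ hblock (by omega) hsub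
    rw [← Finset.card_eq_iff_eq_univ, Fintype.card_fin, ← hcard, heq, hBk]
  · intro x y hy
    obtain rfl : y = ⟨expandPos k i x, hex x⟩ := Fin.ext hy
    rfl

/-- `p_{n,k} ≤ s_k·(n-k+1)·(n-k+1)!` for `2 ≤ k ≤ n`. -/
theorem minBlockCount_le (n k : ℕ) (hk : 2 ≤ k) (hkn : k ≤ n) :
    minBlockCount n k ≤ simpleCount k * (n - k + 1) * Nat.factorial (n - k + 1) := by
  have hex : ∀ π : {π : Equiv.Perm (Fin n) // ∃ B, IsMinimalBlock π B ∧ B.card = k},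
      ∃ c : ({σ : Equiv.Perm (Fin k) // IsSimplePerm σ} × Fin (n - k + 1)) ×
        Equiv.Perm (Fin (n - k + 1)), Encodes n k π.1 c.1.1.1 c.1.2 c.2 := by
    rintro ⟨π, B, hB, hBk⟩
    obtain ⟨σ, i, τ, hs, he⟩ := exists_encodes hk hkn π B hB hBk
    exact ⟨((⟨σ, hs⟩, i), τ), he⟩
  choose F hF using hex
  have hinj : Function.Injective F := by
    intro π π' h
    have h1 := hF π
    rw [h] at h1
    exact Subtype.ext (h1.unique hk hkn (hF π'))
  have hle := Nat.card_le_card_of_injective F hinj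
  have hcard : Nat.card (Equiv.Perm (Fin (n - k + 1))) = Nat.factorial (n - k + 1) := by
    rw [Nat.card_eq_fintype_card, Fintype.card_perm, Fintype.card_fin]
  rw [Nat.card_prod, Nat.card_prod, hcard, Nat.card_fin] at hle
  exact hle
end

section
/- For every fixed positive integer c there exists a constant K > 0 such that for all positive integers n, Σ_{k=c+2}^{n−c} p_{n,k} ≤ K·n!·n^{−c}; that is, Σ_{k=c+2}^{n−c} p_{n,k}/n! = O(n^{−c}). -/
open Finset in
theorem aux_card_image_eq {n : ℕ} (S T : Finset (Fin n)) (k : ℕ) (hS : S.card = k) :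
    (univ.filter (fun π : Equiv.Perm (Fin n) => S.image π = T)).card
      ≤ k.factorial * (n - k).factorial := by
  classical
  by_cases hne : ∃ π₀ : Equiv.Perm (Fin n), S.image π₀ = T
  swap
  · rw [Finset.card_eq_zero.2]
    · exact Nat.zero_le _
    · refine Finset.filter_eq_empty_iff.2 ?_
      intro π _ h
      exact hne ⟨π, h⟩
  obtain ⟨π₀, h₀⟩ := hne
  have key : ∀ π : Equiv.Perm (Fin n), S.image π = T → ∀ x, x ∈ S ↔ π x ∈ T := by
    intro π h x
    subst h
    simp
  have key' : ∀ π : Equiv.Perm (Fin n), S.image π = T → ∀ x, x ∉ S ↔ π x ∉ T :=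
    fun π h x => not_congr (key π h x)
  let f : {π : Equiv.Perm (Fin n) // S.image π = T} →
      ({x // x ∈ S} ≃ {x // x ∈ T}) × ({x // x ∉ S} ≃ {x // x ∉ T}) :=
    fun π => (π.1.subtypeEquiv (key π.1 π.2), π.1.subtypeEquiv (key' π.1 π.2))
  have hf : Function.Injective f := by
    rintro ⟨π, h⟩ ⟨σ, h'⟩ he
    simp only [f, Prod.mk.injEq] at he
    apply Subtype.ext
    apply Equiv.ext
    intro x
    by_cases hx : x ∈ S
    · simpa using congrArg Subtype.val (Equiv.congr_fun he.1 ⟨x, hx⟩)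
    · simpa using congrArg Subtype.val (Equiv.congr_fun he.2 ⟨x, hx⟩)
  have hc := Fintype.card_le_of_injective f hf
  rw [Fintype.card_prod, Fintype.card_equiv (π₀.subtypeEquiv (key π₀ h₀)),
    Fintype.card_equiv (π₀.subtypeEquiv (key' π₀ h₀)), Fintype.card_subtype] at hc
  have h1 : Fintype.card {x // x ∈ S} = k := by simp [hS]
  have h2 : Fintype.card {x // x ∉ S} = n - k := by
    rw [Fintype.card_subtype_compl]; simp [hS]
  rw [h1, h2] at hc
  exact hc

/-- The interval of `k` elements starting at `i`. -/
def auxInterval (n k i : ℕ) : Finset (Fin n) :=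
  Finset.univ.filter (fun x : Fin n => i ≤ x.1 ∧ x.1 < i + k)

open Finset in
theorem aux_interval {n k : ℕ} (hk : 0 < k) (i j : Fin n) (h : (Icc i j).card = k) :
    ∃ a ∈ range (n - k + 1), Icc i j = auxInterval n k a := by
  rw [Fin.card_Icc] at h
  refine ⟨i.1, ?_, ?_⟩
  · simp only [mem_range]; omega
  · ext x
    simp only [auxInterval, mem_Icc, mem_filter, mem_univ, true_and, Fin.le_def]
    omega

open Finset in
theorem aux_count (n k : ℕ) (hk : 0 < k) :
    minBlockCount n k ≤ (n - k + 1) ^ 2 * (k.factorial * (n - k).factorial) := by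
  classical
  let P := (range (n - k + 1) ×ˢ range (n - k + 1)).filter
    (fun p => (auxInterval n k p.1).card = k)
  have hsub : (univ.filter (fun π : Equiv.Perm (Fin n) => ∃ B, IsMinimalBlock π B ∧ B.card = k))
      ⊆ P.biUnion (fun p => univ.filter (fun π : Equiv.Perm (Fin n) =>
          (auxInterval n k p.1).image π = auxInterval n k p.2)) := by
    intro π hπ
    simp only [mem_filter, mem_univ, true_and] at hπ
    obtain ⟨B, ⟨⟨_, ⟨i, j, hB⟩, a, b, hI⟩, _, _⟩, hcard⟩ := hπ
    have hIc : (B.image π).card = k := by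
      rw [card_image_of_injective _ π.injective, hcard]
    obtain ⟨u, hu, hu'⟩ := aux_interval hk i j (hB ▸ hcard)
    obtain ⟨v, hv, hv'⟩ := aux_interval hk a b (hI ▸ hIc)
    simp only [mem_biUnion, mem_filter, mem_univ, true_and, P, mem_product]
    exact ⟨(u, v), ⟨⟨hu, hv⟩, by rw [← hu', ← hB, hcard]⟩, by
      rw [← hu', ← hv', ← hB, hI]⟩
  have h1 : minBlockCount n k = (univ.filter (fun π : Equiv.Perm (Fin n) =>
      ∃ B, IsMinimalBlock π B ∧ B.card = k)).card := by
    rw [minBlockCount, Nat.card_eq_fintype_card, Fintype.card_subtype]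
  rw [h1]
  refine (card_le_card hsub).trans ?_
  refine (card_biUnion_le_card_mul _ _ (k.factorial * (n - k).factorial) ?_).trans ?_
  · intro p hp
    exact aux_card_image_eq _ _ k (mem_filter.1 hp).2
  · refine Nat.mul_le_mul_right _ ((card_filter_le _ _).trans ?_)
    rw [card_product, card_range, sq]

theorem aux_choose_mono {N m i : ℕ} (h : m ≤ i) (hi : i ≤ N / 2) :
    N.choose m ≤ N.choose i := by
  induction i, h using Nat.le_induction with
  | base => exact le_rfl
  | succ i hmi ih =>
    exact (ih (by omega)).trans (Nat.choose_le_succ_of_lt_half_left (by omega))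

theorem aux_choose {N m i : ℕ} (h : m ≤ i) (hi : i + m ≤ N) :
    N ^ m ≤ 2 ^ m * m.factorial * N.choose i := by
  have h1 : N.choose m ≤ N.choose i := by
    rcases le_or_gt i (N / 2) with h2 | h2
    · exact aux_choose_mono h h2
    · rw [← Nat.choose_symm (show i ≤ N by omega)]
      exact aux_choose_mono (by omega) (by omega)
  calc N ^ m ≤ (2 * (N + 1 - m)) ^ m := Nat.pow_le_pow_left (by omega) _
    _ = 2 ^ m * (N + 1 - m) ^ m := mul_pow _ _ _
    _ ≤ 2 ^ m * N.descFactorial m := Nat.mul_le_mul_left _ (Nat.pow_sub_le_descFactorial N m)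
    _ = 2 ^ m * m.factorial * N.choose m := by
      rw [Nat.descFactorial_eq_factorial_mul_choose, mul_assoc]
    _ ≤ _ := Nat.mul_le_mul_left _ h1

theorem aux_bound {n k d : ℕ} (hk : d + 2 ≤ k) (hkn : k + d ≤ n) :
    minBlockCount n k * n ^ d ≤ 2 ^ (d + 2) * (d + 2).factorial * n.factorial := by
  obtain ⟨j, rfl⟩ : ∃ j, n = k + j := ⟨n - k, by omega⟩
  have h1 := aux_count (k + j) k (by omega)
  rw [Nat.add_sub_cancel_left] at h1
  have h2 : (j + 1) ^ 2 * (k.factorial * j.factorial) ≤ k.factorial * (j + 2).factorial := by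
    rw [Nat.factorial_succ (j + 1), Nat.factorial_succ j]
    have : 0 ≤ (j + 1) * (k.factorial * j.factorial) := Nat.zero_le _
    nlinarith
  have h3 : (k + j + 2).choose (j + 2) * (k.factorial * (j + 2).factorial)
      = (k + j + 2).factorial := by
    have := Nat.choose_mul_factorial_mul_factorial (show j + 2 ≤ k + j + 2 by omega)
    rw [show k + j + 2 - (j + 2) = k by omega] at this
    rw [← this]; ring
  have h4 : (k + j + 2) ^ (d + 2) ≤ _ :=
    aux_choose (N := k + j + 2) (m := d + 2) (i := j + 2) (by omega) (by omega)
  have h5 : (k + j + 2).factorial ≤ (k + j + 2) ^ 2 * (k + j).factorial := by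
    rw [Nat.factorial_succ (k + j + 1), Nat.factorial_succ (k + j)]
    have : 0 ≤ (k + j + 2) * (k + j).factorial := Nat.zero_le _
    nlinarith
  refine le_of_mul_le_mul_left (a := (k + j + 2) ^ 2) ?_ (pow_pos (Nat.succ_pos _) 2)
  calc (k + j + 2) ^ 2 * (minBlockCount (k + j) k * (k + j) ^ d)
      ≤ (k + j + 2) ^ 2 * (minBlockCount (k + j) k * (k + j + 2) ^ d) := by
        exact Nat.mul_le_mul_left _ (Nat.mul_le_mul_left _ (Nat.pow_le_pow_left (by omega) _))
    _ = minBlockCount (k + j) k * (k + j + 2) ^ (d + 2) := by ring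
    _ ≤ (k.factorial * (j + 2).factorial) *
        (2 ^ (d + 2) * (d + 2).factorial * (k + j + 2).choose (j + 2)) :=
        Nat.mul_le_mul (h1.trans h2) h4
    _ = 2 ^ (d + 2) * (d + 2).factorial * (k + j + 2).factorial := by rw [← h3]; ring
    _ ≤ 2 ^ (d + 2) * (d + 2).factorial * ((k + j + 2) ^ 2 * (k + j).factorial) :=
        Nat.mul_le_mul_left _ h5
    _ = _ := by ring

theorem aux_bound_real {n k d : ℕ} (hn : 0 < n) (hk : d + 2 ≤ k) (hkn : k + d ≤ n) :
    (minBlockCount n k : ℝ) ≤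
      (2 ^ (d + 2) * (d + 2).factorial : ℝ) * (n.factorial : ℝ) / (n : ℝ) ^ d := by
  have hn' : (0 : ℝ) < n := by exact_mod_cast hn
  rw [le_div_iff₀ (by positivity)]
  exact_mod_cast aux_bound hk hkn

/-- For every fixed `c ≥ 1`, `Σ_{k=c+2}^{n-c} p_{n,k} / n! = O(n^{-c})`. -/
theorem sum_minBlockCount_bigO (c : ℕ) (hc : 0 < c) :
    ∃ K : ℝ, 0 < K ∧ ∀ n : ℕ, 0 < n →
      (∑ k ∈ Finset.Icc (c + 2) (n - c), (minBlockCount n k : ℝ)) ≤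
        K * (Nat.factorial n : ℝ) / (n : ℝ) ^ c := by
  obtain ⟨A, hA⟩ : ∃ A : ℝ, A = 2 ^ (c + 2) * (c + 2).factorial := ⟨_, rfl⟩
  obtain ⟨A', hA'⟩ : ∃ A' : ℝ, A' = 2 ^ (c + 1 + 2) * (c + 1 + 2).factorial := ⟨_, rfl⟩
  have hA0 : 0 < A := by rw [hA]; positivity
  have hA0' : 0 < A' := by rw [hA']; positivity
  refine ⟨2 * A + A', by positivity, ?_⟩
  intro n hn
  have hn' : (0 : ℝ) < n := by exact_mod_cast hn
  obtain ⟨X, hX⟩ : ∃ X : ℝ, X = A * (n.factorial : ℝ) / (n : ℝ) ^ c := ⟨_, rfl⟩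
  obtain ⟨Y, hY⟩ : ∃ Y : ℝ, Y = A' * (n.factorial : ℝ) / (n : ℝ) ^ (c + 1) := ⟨_, rfl⟩
  have hX0 : 0 ≤ X := by rw [hX]; positivity
  have hY0 : 0 ≤ Y := by rw [hY]; positivity
  have hterm : ∀ k ∈ Finset.Icc (c + 2) (n - c), (minBlockCount n k : ℝ) ≤
      (if k = c + 2 then X else 0) + (if k = n - c then X else 0) + Y := by
    intro k hk
    rw [Finset.mem_Icc] at hk
    have hb : (minBlockCount n k : ℝ) ≤ X := by
      rw [hX, hA]; exact aux_bound_real hn (by omega) (by omega)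
    by_cases h1 : k = c + 2
    · rw [if_pos h1]; split_ifs <;> linarith
    · by_cases h2 : k = n - c
      · rw [if_pos h2]; split_ifs; linarith
      · rw [if_neg h1, if_neg h2, zero_add, zero_add, hY, hA']
        exact aux_bound_real hn (by omega) (by omega)
  refine (Finset.sum_le_sum hterm).trans ?_
  rw [Finset.sum_add_distrib, Finset.sum_add_distrib, Finset.sum_ite_eq', Finset.sum_ite_eq',
    Finset.sum_const, nsmul_eq_mul]
  have hcard : ((Finset.Icc (c + 2) (n - c)).card : ℝ) ≤ n := by
    have : (Finset.Icc (c + 2) (n - c)).card ≤ n := by rw [Nat.card_Icc]; omega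
    exact_mod_cast this
  have h1 := mul_le_mul_of_nonneg_right hcard hY0
  have h2 : (n : ℝ) * Y = A' * (n.factorial : ℝ) / (n : ℝ) ^ c := by
    rw [hY]; field_simp; ring
  have h3 : (2 * A + A') * (n.factorial : ℝ) / (n : ℝ) ^ c
      = X + X + A' * (n.factorial : ℝ) / (n : ℝ) ^ c := by rw [hX]; ring
  rw [h3, ← h2]
  have h4 : ∀ p : Prop, [Decidable p] → (if p then X else 0) ≤ X := by
    intro p _; split_ifs <;> linarith
  exact add_le_add (add_le_add (h4 _) (h4 _)) h1
end
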